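/- arXiv:1911.01483 — 8 statements merged into one kernel-verified Lean document; each statement's English description precedes it below -/
import Mathlib

section
/- Let (M_n)_{n≥0} be a martingale taking values in ℝ^d with respect to a filtration (F_n), with M_0 = 0, and suppose that for every n ≥ 1 the martingale difference satisfies ‖M_n − M_{n−1}‖ ≤ σ_n almost surely, where the constants σ_n satisfy 0 < σ_n ≤ 1/2. Then for every a > 1 and every n ≥ 1, P(‖M_n‖ ≥ a) ≤ 2 exp(1 − (a−1)² / (2 ∑_{i=1}^n σ_i²)). -/
open MeasureTheory Real

/-!
Since `cosh √t` is a power series in `t` with nonnegative coefficients, it is convex and increasing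
in `t ≥ 0`, which compares the Euclidean law of cosines with the hyperbolic one: in a Hilbert space,
if `‖e‖ ≤ s`, then `cosh (l * ‖x + e‖)` is at most `cosh (l * ‖x‖) * cosh (l * s)` plus a term
linear in `e`. The linear term vanishes in conditional expectation, so the `n`-th martingale step
multiplies the mean of `cosh (l * ‖M‖)` by at most `cosh (l * σ n) ≤ exp ((l * σ n) ^ 2 / 2)`,
and Chernoff's method with `l = a / ∑ σ i ^ 2` bounds the tail by
`2 * exp (-(a ^ 2 / (2 * ∑ σ i ^ 2)))`.
-/

section Cosh

lemma cosh_le_add_mul_cosh_of_sq_le {y u v p q : ℝ} (hp : 0 ≤ p) (hq : 0 ≤ q) (hpq : p + q = 1)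
    (h : y ^ 2 ≤ p * u ^ 2 + q * v ^ 2) : cosh y ≤ p * cosh u + q * cosh v := by
  refine hasSum_le (fun k ↦ ?_) (hasSum_cosh y)
    (((hasSum_cosh u).mul_left p).add ((hasSum_cosh v).mul_left q))
  have pow_le : y ^ (2 * k) ≤ p * u ^ (2 * k) + q * v ^ (2 * k) := calc
    y ^ (2 * k) = (y ^ 2) ^ k := pow_mul ..
    _ ≤ (p * u ^ 2 + q * v ^ 2) ^ k := by gcongr
    _ ≤ p * (u ^ 2) ^ k + q * (v ^ 2) ^ k :=
      (convexOn_pow k).2 (sq_nonneg u) (sq_nonneg v) hp hq hpq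
    _ = p * u ^ (2 * k) + q * v ^ (2 * k) := by rw [← pow_mul, ← pow_mul]
  rw [mul_div_assoc', mul_div_assoc', ← add_div]
  gcongr

/- The right-hand sides are the Euclidean and hyperbolic laws of cosines for an angle of cosine
`-w`; both are affine in `w`, with endpoints `r - s` and `r + s`. -/
lemma cosh_le_cosh_mul_cosh_add_of_sq_le {y r s w : ℝ} (hw : |w| ≤ 1)
    (h : y ^ 2 ≤ r ^ 2 + s ^ 2 + 2 * w * (r * s)) :
    cosh y ≤ cosh r * cosh s + w * (sinh r * sinh s) := by
  obtain ⟨neg_one_le, le_one⟩ := abs_le.1 hw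
  calc
    cosh y ≤ (1 + w) / 2 * cosh (r + s) + (1 - w) / 2 * cosh (r - s) := by
      refine cosh_le_add_mul_cosh_of_sq_le (by linarith) (by linarith) (by ring) (h.trans_eq ?_)
      ring
    _ = cosh r * cosh s + w * (sinh r * sinh s) := by
      rw [cosh_add, cosh_sub]
      ring

lemma exp_le_two_mul_cosh_of_le_abs {l a x : ℝ} (hl : 0 ≤ l) (hx : a ≤ |x|) :
    exp (l * a) ≤ 2 * cosh (l * x) := calc
  exp (l * a) ≤ exp |l * x| := by
    rw [abs_mul, abs_of_nonneg hl]
    gcongr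
  _ ≤ 2 * cosh |l * x| := by
    rw [cosh_eq]
    linarith [exp_pos (-|l * x|)]
  _ = 2 * cosh (l * x) := by rw [cosh_abs]

end Cosh

section RadialSinh

variable {E : Type*} [NormedAddCommGroup E] [InnerProductSpace ℝ E]

/-- The vector field `x ↦ sinh (l * ‖x‖) * x / ‖x‖`, which for `l ≠ 0` is `1 / l` times the gradient
of `x ↦ cosh (l * ‖x‖)`. Division by zero gives it the correct value `0` at the origin. -/
noncomputable def radialSinh (l : ℝ) (x : E) : E := (sinh (l * ‖x‖) / ‖x‖) • x

lemma norm_radialSinh (l : ℝ) (x : E) : ‖radialSinh l x‖ = |sinh (l * ‖x‖)| := by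
  rcases eq_or_ne x 0 with rfl | hx
  · simp [radialSinh]
  · rw [radialSinh, norm_smul, norm_div, norm_norm, div_mul_cancel₀ _ (norm_ne_zero_iff.2 hx),
      norm_eq_abs]

lemma stronglyMeasurable_radialSinh_comp {Ω : Type*} {m : MeasurableSpace Ω} {X : Ω → E}
    (hX : StronglyMeasurable X) (l : ℝ) : StronglyMeasurable fun ω ↦ radialSinh l (X ω) := by
  have measurable_factor : Measurable fun r : ℝ ↦ sinh (l * r) / r := by fun_prop
  exact (measurable_factor.comp hX.norm.measurable).stronglyMeasurable.smul hX

lemma cosh_mul_norm_add_le (l : ℝ) {s : ℝ} (x : E) {e : E} (he : ‖e‖ ≤ s) :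
    cosh (l * ‖x + e‖) ≤
      cosh (l * ‖x‖) * cosh (l * s) + sinh (l * s) / s * inner ℝ (radialSinh l x) e := by
  have hs : 0 ≤ s := (norm_nonneg e).trans he
  have inner_le : |inner ℝ x e| ≤ ‖x‖ * s :=
    (abs_real_inner_le_norm x e).trans (by gcongr)
  -- In the degenerate case `‖x‖ * s = 0` the quotient is `0`, as is the inner product.
  set w := inner ℝ x e / (‖x‖ * s) with w_def
  have abs_w_le : |w| ≤ 1 := by
    rw [abs_div, abs_of_nonneg (by positivity : 0 ≤ ‖x‖ * s)]
    exact div_le_one_of_le₀ inner_le (by positivity)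
  have w_mul : w * (‖x‖ * s) = inner ℝ x e :=
    div_mul_cancel_of_imp fun h ↦ abs_nonpos_iff.1 (h ▸ inner_le)
  have law_of_cosines :
      (l * ‖x + e‖) ^ 2 ≤ (l * ‖x‖) ^ 2 + (l * s) ^ 2 + 2 * w * (l * ‖x‖ * (l * s)) := calc
    (l * ‖x + e‖) ^ 2 = l ^ 2 * (‖x‖ ^ 2 + 2 * (w * (‖x‖ * s)) + ‖e‖ ^ 2) := by
      rw [mul_pow, norm_add_sq_real, w_mul]
    _ ≤ l ^ 2 * (‖x‖ ^ 2 + 2 * (w * (‖x‖ * s)) + s ^ 2) := by gcongr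
    _ = _ := by ring
  refine (cosh_le_cosh_mul_cosh_add_of_sq_le abs_w_le law_of_cosines).trans_eq ?_
  rw [radialSinh, real_inner_smul_left, w_def]
  ring

end RadialSinh

section Expectation

variable {E : Type*} [NormedAddCommGroup E]
  {Ω : Type*} {m m0 : MeasurableSpace Ω} {μ : Measure Ω}

lemma integrable_cosh_mul_norm [IsFiniteMeasure μ] {X : Ω → E} {B : ℝ}
    (hX : AEStronglyMeasurable X μ) (hB : ∀ᵐ ω ∂μ, ‖X ω‖ ≤ B) (l : ℝ) :
    Integrable (fun ω ↦ cosh (l * ‖X ω‖)) μ := by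
  have continuous_cosh_norm : Continuous fun x : E ↦ cosh (l * ‖x‖) := by fun_prop
  refine .of_bound (continuous_cosh_norm.comp_aestronglyMeasurable hX) (cosh (l * B)) ?_
  filter_upwards [hB] with ω hω
  rw [norm_eq_abs, abs_of_pos (cosh_pos _), cosh_le_cosh, abs_mul, abs_mul, abs_norm]
  gcongr
  exact hω.trans (le_abs_self B)

variable [InnerProductSpace ℝ E]

lemma integral_inner_eq_zero_of_condExp_ae_eq_zero [CompleteSpace E] (hm : m ≤ m0)
    [SigmaFinite (μ.trim hm)] {Y D : Ω → E} (hY : StronglyMeasurable[m] Y) (hD : Integrable D μ)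
    (hYD : Integrable (fun ω ↦ inner ℝ (Y ω) (D ω)) μ) (hcond : μ[D | m] =ᵐ[μ] 0) :
    ∫ ω, inner ℝ (Y ω) (D ω) ∂μ = 0 := by
  have pull_out : μ[fun ω ↦ inner ℝ (Y ω) (D ω) | m] =ᵐ[μ] fun ω ↦ inner ℝ (Y ω) (μ[D | m] ω) :=
    condExp_bilin_of_stronglyMeasurable_left (innerSL ℝ) hY hYD hD
  rw [← integral_condExp hm]
  refine integral_eq_zero_of_ae ?_
  filter_upwards [pull_out, hcond] with ω h_pull_out h_cond
  rw [h_pull_out, h_cond, Pi.zero_apply, inner_zero_right, Pi.zero_apply]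

variable [IsFiniteMeasure μ]

lemma integrable_inner_radialSinh {X D : Ω → E} {B s : ℝ} (hX : StronglyMeasurable X)
    (hB : ∀ᵐ ω ∂μ, ‖X ω‖ ≤ B) (hD : AEStronglyMeasurable D μ) (hs : ∀ᵐ ω ∂μ, ‖D ω‖ ≤ s) (l : ℝ) :
    Integrable (fun ω ↦ inner ℝ (radialSinh l (X ω)) (D ω)) μ := by
  refine .of_bound ((stronglyMeasurable_radialSinh_comp hX l).aestronglyMeasurable.inner hD)
    (sinh (|l| * B) * s) ?_
  filter_upwards [hB, hs] with ω hXω hDω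
  have norm_radialSinh_le : ‖radialSinh l (X ω)‖ ≤ sinh (|l| * B) := by
    rw [norm_radialSinh, abs_sinh, abs_mul, abs_norm, sinh_le_sinh]
    gcongr
  exact (norm_inner_le_norm _ _).trans
    (mul_le_mul norm_radialSinh_le hDω (norm_nonneg _) ((norm_nonneg _).trans norm_radialSinh_le))

lemma integral_cosh_mul_norm_add_le [CompleteSpace E] (hm : m ≤ m0) {X D : Ω → E} {B s : ℝ}
    (hX : StronglyMeasurable[m] X) (hB : ∀ᵐ ω ∂μ, ‖X ω‖ ≤ B) (hD : AEStronglyMeasurable D μ)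
    (hs : ∀ᵐ ω ∂μ, ‖D ω‖ ≤ s) (hcond : μ[D | m] =ᵐ[μ] 0) (l : ℝ) :
    ∫ ω, cosh (l * ‖X ω + D ω‖) ∂μ ≤ (∫ ω, cosh (l * ‖X ω‖) ∂μ) * cosh (l * s) := by
  have hX' : StronglyMeasurable X := hX.mono hm
  have norm_add_le_add : ∀ᵐ ω ∂μ, ‖X ω + D ω‖ ≤ B + s := by
    filter_upwards [hB, hs] with ω hXω hDω using norm_add_le_of_le hXω hDω
  have integrable_cosh_add : Integrable (fun ω ↦ cosh (l * ‖X ω + D ω‖)) μ :=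
    integrable_cosh_mul_norm (hX'.aestronglyMeasurable.add hD) norm_add_le_add l
  have integrable_cosh : Integrable (fun ω ↦ cosh (l * ‖X ω‖)) μ :=
    integrable_cosh_mul_norm hX'.aestronglyMeasurable hB l
  have integrable_inner := integrable_inner_radialSinh hX' hB hD hs l
  have integral_inner : ∫ ω, inner ℝ (radialSinh l (X ω)) (D ω) ∂μ = 0 :=
    integral_inner_eq_zero_of_condExp_ae_eq_zero hm (stronglyMeasurable_radialSinh_comp hX l)
      (.of_bound hD s hs) integrable_inner hcond
  calc
    ∫ ω, cosh (l * ‖X ω + D ω‖) ∂μ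
        ≤ ∫ ω, (cosh (l * ‖X ω‖) * cosh (l * s) +
            sinh (l * s) / s * inner ℝ (radialSinh l (X ω)) (D ω)) ∂μ := by
      refine integral_mono_ae integrable_cosh_add
        ((integrable_cosh.mul_const _).add (integrable_inner.const_mul _)) ?_
      filter_upwards [hs] with ω hDω using cosh_mul_norm_add_le l (X ω) hDω
    _ = (∫ ω, cosh (l * ‖X ω‖) ∂μ) * cosh (l * s) := by
      rw [integral_add (integrable_cosh.mul_const _) (integrable_inner.const_mul _),
        integral_mul_const, integral_const_mul, integral_inner, mul_zero, add_zero]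

end Expectation

section Chernoff

variable {Ω : Type*} {m0 : MeasurableSpace Ω} {μ : Measure Ω} {X : Ω → ℝ}

lemma measureReal_le_abs_le_mul_integral_cosh [IsFiniteMeasure μ] {l : ℝ} (hl : 0 ≤ l) (a : ℝ)
    (hint : Integrable (fun ω ↦ cosh (l * X ω)) μ) :
    μ.real {ω | a ≤ |X ω|} ≤ 2 * exp (-(l * a)) * ∫ ω, cosh (l * X ω) ∂μ := by
  have subset : {ω | a ≤ |X ω|} ⊆ {ω | exp (l * a) ≤ 2 * cosh (l * X ω)} :=
    fun ω hω ↦ exp_le_two_mul_cosh_of_le_abs hl hω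
  have markov : exp (l * a) * μ.real {ω | a ≤ |X ω|} ≤ 2 * ∫ ω, cosh (l * X ω) ∂μ := calc
    _ ≤ exp (l * a) * μ.real {ω | exp (l * a) ≤ 2 * cosh (l * X ω)} := by
      gcongr
      exact measure_ne_top _ _
    _ ≤ ∫ ω, 2 * cosh (l * X ω) ∂μ :=
      mul_meas_ge_le_integral_of_nonneg
        (.of_forall fun ω ↦ mul_nonneg zero_le_two (cosh_pos (l * X ω)).le) (hint.const_mul 2) _
    _ = 2 * ∫ ω, cosh (l * X ω) ∂μ := integral_const_mul ..
  rw [exp_neg, mul_right_comm, ← div_eq_mul_inv, le_div_iff₀' (exp_pos _)]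
  exact markov

lemma measureReal_le_abs_le_two_mul_exp_of_integral_cosh_le [IsFiniteMeasure μ] {a v : ℝ}
    (ha : 0 ≤ a) (hv : 0 < v) (hint : ∀ l, Integrable (fun ω ↦ cosh (l * X ω)) μ)
    (hle : ∀ l, ∫ ω, cosh (l * X ω) ∂μ ≤ exp (l ^ 2 * v / 2)) :
    μ.real {ω | a ≤ |X ω|} ≤ 2 * exp (-(a ^ 2 / (2 * v))) := calc
  _ ≤ 2 * exp (-(a / v * a)) * ∫ ω, cosh (a / v * X ω) ∂μ :=
    measureReal_le_abs_le_mul_integral_cosh (by positivity) a (hint _)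
  _ ≤ 2 * exp (-(a / v * a)) * exp ((a / v) ^ 2 * v / 2) := by
    gcongr
    exact hle _
  _ = 2 * exp (-(a ^ 2 / (2 * v))) := by
    rw [mul_assoc, ← exp_add]
    congr 2
    field_simp
    ring

end Chernoff

section BoundedIncrements

variable {E : Type*} [NormedAddCommGroup E] {Ω : Type*} {m0 : MeasurableSpace Ω} {μ : Measure Ω}
  {ℱ : Filtration ℕ m0} {M : ℕ → Ω → E} {σ : ℕ → ℝ}

lemma ae_norm_le_sum_of_ae_norm_sub_le (hM0 : M 0 =ᵐ[μ] 0)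
    (hdiff : ∀ i, ∀ᵐ ω ∂μ, ‖M (i + 1) ω - M i ω‖ ≤ σ (i + 1)) (n : ℕ) :
    ∀ᵐ ω ∂μ, ‖M n ω‖ ≤ ∑ i ∈ Finset.Icc 1 n, σ i := by
  induction n with
  | zero => filter_upwards [hM0] with ω hω using by simp [hω]
  | succ n ih =>
    filter_upwards [ih, hdiff n] with ω h_norm h_diff
    rw [Finset.sum_Icc_succ_top n.succ_pos, ← add_sub_cancel (M n ω) (M (n + 1) ω)]
    exact norm_add_le_of_le h_norm h_diff

lemma condExp_sub_ae_eq_zero_of_martingale [NormedSpace ℝ E] [CompleteSpace E]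
    (hM : Martingale M ℱ μ) {i j : ℕ} (hij : i ≤ j) : μ[M j - M i | ℱ i] =ᵐ[μ] 0 := by
  filter_upwards [condExp_sub (hM.integrable j) (hM.integrable i) (ℱ i), hM.condExp_ae_eq hij,
    hM.condExp_ae_eq le_rfl] with ω h_sub h_later h_now
  rw [h_sub, Pi.sub_apply, h_later, h_now, sub_self, Pi.zero_apply]

variable [InnerProductSpace ℝ E] [CompleteSpace E] [IsProbabilityMeasure μ]

lemma integral_cosh_mul_norm_le_exp_of_martingale (hM : Martingale M ℱ μ) (hM0 : M 0 =ᵐ[μ] 0)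
    (hdiff : ∀ i, ∀ᵐ ω ∂μ, ‖M (i + 1) ω - M i ω‖ ≤ σ (i + 1)) (l : ℝ) (n : ℕ) :
    ∫ ω, cosh (l * ‖M n ω‖) ∂μ ≤ exp (l ^ 2 * (∑ i ∈ Finset.Icc 1 n, σ i ^ 2) / 2) := by
  induction n with
  | zero =>
    have cosh_ae_eq : (fun ω ↦ cosh (l * ‖M 0 ω‖)) =ᵐ[μ] fun _ ↦ 1 := by
      filter_upwards [hM0] with ω hω using by simp [hω]
    simp [integral_congr_ae cosh_ae_eq]
  | succ n ih =>
    have one_step := integral_cosh_mul_norm_add_le (ℱ.le n) (hM.stronglyMeasurable n)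
      (ae_norm_le_sum_of_ae_norm_sub_le hM0 hdiff n)
      ((hM.integrable (n + 1)).sub (hM.integrable n)).aestronglyMeasurable (hdiff n)
      (condExp_sub_ae_eq_zero_of_martingale hM n.le_succ) l
    simp only [Pi.sub_apply, add_sub_cancel] at one_step
    calc
      ∫ ω, cosh (l * ‖M (n + 1) ω‖) ∂μ
          ≤ (∫ ω, cosh (l * ‖M n ω‖) ∂μ) * cosh (l * σ (n + 1)) := one_step
      _ ≤ exp (l ^ 2 * (∑ i ∈ Finset.Icc 1 n, σ i ^ 2) / 2) * exp ((l * σ (n + 1)) ^ 2 / 2) := by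
        gcongr
        exact cosh_le_exp_half_sq _
      _ = exp (l ^ 2 * (∑ i ∈ Finset.Icc 1 (n + 1), σ i ^ 2) / 2) := by
        rw [← exp_add, Finset.sum_Icc_succ_top n.succ_pos]
        ring_nf

theorem stmt_0_general (hM : Martingale M ℱ μ) (hM0 : M 0 =ᵐ[μ] 0)
    (hdiff : ∀ i, ∀ᵐ ω ∂μ, ‖M (i + 1) ω - M i ω‖ ≤ σ (i + 1)) {a : ℝ} (ha : 0 ≤ a) {n : ℕ}
    (hσ : 0 < ∑ i ∈ Finset.Icc 1 n, σ i ^ 2) :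
    μ {ω | a ≤ ‖M n ω‖} ≤
      ENNReal.ofReal (2 * exp (-(a ^ 2 / (2 * ∑ i ∈ Finset.Icc 1 n, σ i ^ 2)))) := by
  have tail := measureReal_le_abs_le_two_mul_exp_of_integral_cosh_le ha hσ
    (integrable_cosh_mul_norm (hM.integrable n).aestronglyMeasurable
      (ae_norm_le_sum_of_ae_norm_sub_le hM0 hdiff n))
    (integral_cosh_mul_norm_le_exp_of_martingale hM hM0 hdiff · n)
  simp only [abs_norm] at tail
  rw [← ofReal_measureReal]
  exact ENNReal.ofReal_le_ofReal tail

end BoundedIncrements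

/-- multidimensional Azuma–Hoeffding type bound. If `M` is an `ℝ^d`-valued
martingale with `M 0 = 0` and bounded differences `‖M n − M (n−1)‖ ≤ σ n ≤ 1/2`, then for
every `a > 1` and `n ≥ 1`,
`P(‖M n‖ ≥ a) ≤ 2 exp(1 − (a−1)² / (2 ∑_{i=1}^n σ i ²))`. -/
theorem stmt_0 (d : ℕ) {Ω : Type*} {m0 : MeasurableSpace Ω} (μ : Measure Ω)
    [IsProbabilityMeasure μ] (ℱ : Filtration ℕ m0)
    (M : ℕ → Ω → EuclideanSpace ℝ (Fin d)) (hM : Martingale M ℱ μ)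
    (hM0 : ∀ ω, M 0 ω = 0) (σ : ℕ → ℝ)
    (hσ : ∀ n : ℕ, 1 ≤ n → 0 < σ n ∧ σ n ≤ 1 / 2)
    (hdiff : ∀ n : ℕ, 1 ≤ n → ∀ᵐ ω ∂μ, ‖M n ω - M (n - 1) ω‖ ≤ σ n) :
    ∀ a : ℝ, 1 < a → ∀ n : ℕ, 1 ≤ n →
      μ {ω | a ≤ ‖M n ω‖} ≤
        ENNReal.ofReal
          (2 * Real.exp (1 - (a - 1) ^ 2 / (2 * ∑ i ∈ Finset.Icc 1 n, (σ i) ^ 2))) := by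
  intro a ha n hn
  have sum_pos : 0 < ∑ i ∈ Finset.Icc 1 n, σ i ^ 2 :=
    Finset.sum_pos (fun i hi ↦ pow_pos (hσ i (Finset.mem_Icc.1 hi).1).1 2) ⟨1, by simp [hn]⟩
  refine (stmt_0_general hM (.of_forall hM0) (fun i ↦ hdiff (i + 1) i.succ_pos)
    (zero_le_one.trans ha.le) sum_pos).trans ?_
  have sq_div_le : (a - 1) ^ 2 / (2 * ∑ i ∈ Finset.Icc 1 n, σ i ^ 2) ≤
      a ^ 2 / (2 * ∑ i ∈ Finset.Icc 1 n, σ i ^ 2) := by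
    gcongr
    linarith
  gcongr
  linarith
end

section
/- Let σ ∈ (0, 1/2], Y ≥ 1, λ > 0 with λ(Y − σ) ≥ 1, and let s ∈ {−1, 1}. Define D(x) = s·(√(Y² + 2Yx + σ²) − Y) for x ∈ [−σ, σ]. Then for every x ∈ [−σ, σ], exp(λ D(x)) ≤ cosh(λσ) + s·(x/σ)·sinh(λσ). (That is, the convex function x ↦ exp(λD(x)) lies below the chord connecting its values at x = −σ and x = σ.) -/
open Real

/-!
For `c = lam * s` it suffices that `u ↦ exp (c * √u)` is convex on `[(Y - σ)², ∞)`: composing with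
the affine map `x ↦ Y² + 2Yx + σ²`, which sends `±σ` to `(Y ± σ)²`, gives a convex function of `x`
on `[-σ, σ]`, and such a function lies below its chord. For `c ≤ 0` the convexity holds because
`c * √u` is convex and `exp` is convex and increasing. For `c > 0` the derivative is
`(c² / 2) * (exp v / v)` with `v = c * √u`, and `exp v / v` increases for `1 ≤ v`.
-/

lemma monotoneOn_exp_div_self : MonotoneOn (fun v : ℝ => exp v / v) (Set.Ici 1) := by
  intro v (hv : 1 ≤ v) w (hw : 1 ≤ w) hvw
  have h_linear : w ≤ (w - v + 1) * v := by
    nlinarith [mul_nonneg (sub_nonneg.2 hvw) (sub_nonneg.2 hv)]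
  have h_exp : exp v * (w - v + 1) ≤ exp w :=
    calc exp v * (w - v + 1) ≤ exp v * exp (w - v) := by gcongr; exact add_one_le_exp _
      _ = exp w := by rw [← exp_add, add_sub_cancel]
  change exp v / v ≤ exp w / w
  rw [div_le_div_iff₀ (by positivity) (by positivity)]
  calc exp v * w ≤ exp v * ((w - v + 1) * v) := by gcongr
    _ = exp v * (w - v + 1) * v := by ring
    _ ≤ exp w * v := by gcongr

lemma hasDerivAt_exp_mul_sqrt (c : ℝ) {u : ℝ} (hu : u ≠ 0) :
    HasDerivAt (fun u => exp (c * √u)) (c ^ 2 / 2 * (exp (c * √u) / (c * √u))) u := by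
  convert ((hasDerivAt_sqrt hu).const_mul c).exp using 1
  rcases eq_or_ne c 0 with rfl | hc
  · simp
  · field_simp

lemma convexOn_exp_mul_sqrt_of_one_le {c r : ℝ} (hr : 0 < r) (hcr : 1 ≤ c * r) :
    ConvexOn ℝ (Set.Ici (r ^ 2)) fun u => exp (c * √u) := by
  have hc : 0 < c := pos_of_mul_pos_left (by linarith) hr.le
  have one_le {u : ℝ} (hu : r ^ 2 < u) : 1 ≤ c * √u :=
    hcr.trans (by gcongr; exact le_sqrt_of_sq_le hu.le)
  have hasDeriv {u : ℝ} (hu : r ^ 2 < u) :=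
    hasDerivAt_exp_mul_sqrt c ((sq_nonneg r).trans_lt hu).ne'
  refine MonotoneOn.convexOn_of_deriv (convex_Ici _) (by fun_prop) ?_ ?_ <;> rw [interior_Ici]
  · exact fun u hu => (hasDeriv hu).differentiableAt.differentiableWithinAt
  · intro u hu v hv huv
    rw [(hasDeriv hu).deriv, (hasDeriv hv).deriv]
    gcongr ?_ * ?_
    exact monotoneOn_exp_div_self (one_le hu) (one_le hv) (by gcongr)

lemma convexOn_exp_mul_sqrt_of_nonpos {c : ℝ} (hc : c ≤ 0) :
    ConvexOn ℝ (Set.Ici 0) fun u => exp (c * √u) := by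
  have h_exponent : ConvexOn ℝ (Set.Ici 0) fun u => c * √u := by
    simpa using (strictConcaveOn_sqrt.concaveOn.neg).smul (neg_nonneg.2 hc)
  have h_image : Convex ℝ ((fun u => c * √u) '' Set.Ici 0) :=
    Real.convex_iff_isPreconnected.2 (isPreconnected_Ici.image _ (by fun_prop))
  exact (convexOn_exp.subset (Set.subset_univ _) h_image).comp h_exponent
    (exp_monotone.monotoneOn _)

lemma convexOn_comp_mul_add {𝕜 β : Type*} [Field 𝕜] [LinearOrder 𝕜] [AddCommMonoid β]
    [PartialOrder β] [SMul 𝕜 β] {f : 𝕜 → β} {t : Set 𝕜} (hf : ConvexOn 𝕜 t f) (a b : 𝕜) :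
    ConvexOn 𝕜 {x | a * x + b ∈ t} fun x => f (a * x + b) := by
  have h_affine (x : 𝕜) : AffineMap.lineMap b (a + b) x = a * x + b := by
    simp [AffineMap.lineMap_apply, mul_comm x]
  simpa only [Set.preimage, Function.comp_def, h_affine] using
    hf.comp_affineMap (AffineMap.lineMap b (a + b))

lemma le_chord_of_convexOn_Icc_neg {𝕜 : Type*} [Field 𝕜] [LinearOrder 𝕜]
    [IsStrictOrderedRing 𝕜] {f : 𝕜 → 𝕜} {σ x : 𝕜} (hσ : 0 < σ)
    (hf : ConvexOn 𝕜 (Set.Icc (-σ) σ) f) (hx : x ∈ Set.Icc (-σ) σ) :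
    f x ≤ (f σ + f (-σ)) / 2 + x / σ * ((f σ - f (-σ)) / 2) := by
  obtain ⟨hx_left, hx_right⟩ := hx
  have h_combination : (σ + x) / (2 * σ) * σ + (σ - x) / (2 * σ) * -σ = x := by
    field_simp
    ring
  calc f x = f ((σ + x) / (2 * σ) * σ + (σ - x) / (2 * σ) * -σ) := by rw [h_combination]
    _ ≤ (σ + x) / (2 * σ) * f σ + (σ - x) / (2 * σ) * f (-σ) :=
      hf.2 (Set.right_mem_Icc.2 (by linarith)) (Set.left_mem_Icc.2 (by linarith))
        (div_nonneg (by linarith) (by linarith)) (div_nonneg (by linarith) (by linarith))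
        (by field_simp; ring)
    _ = (f σ + f (-σ)) / 2 + x / σ * ((f σ - f (-σ)) / 2) := by
      field_simp
      ring

lemma convexOn_exp_mul_sqrt_quadratic_sub {σ Y c : ℝ} (hY : 0 ≤ Y)
    (hconv : ConvexOn ℝ (Set.Ici ((Y - σ) ^ 2)) fun u => exp (c * √u)) :
    ConvexOn ℝ (Set.Icc (-σ) σ)
      fun x => exp (c * (√(Y ^ 2 + 2 * Y * x + σ ^ 2) - Y)) := by
  have h_maps : Set.Icc (-σ) σ ⊆ {x | 2 * Y * x + (Y ^ 2 + σ ^ 2) ∈ Set.Ici ((Y - σ) ^ 2)} := by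
    intro x hx
    change (Y - σ) ^ 2 ≤ 2 * Y * x + (Y ^ 2 + σ ^ 2)
    nlinarith [mul_le_mul_of_nonneg_left hx.1 hY]
  refine (((convexOn_comp_mul_add hconv (2 * Y) (Y ^ 2 + σ ^ 2)).subset h_maps
    (convex_Icc _ _)).smul (exp_pos (-(c * Y))).le).congr fun x _ => ?_
  simp only [smul_eq_mul, ← exp_add]
  ring_nf

lemma exp_mul_sqrt_quadratic_sub_le_cosh_add_sinh {σ Y c x : ℝ} (hσ : 0 < σ) (hσY : σ ≤ Y)
    (hconv : ConvexOn ℝ (Set.Ici ((Y - σ) ^ 2)) fun u => exp (c * √u))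
    (hx : x ∈ Set.Icc (-σ) σ) :
    exp (c * (√(Y ^ 2 + 2 * Y * x + σ ^ 2) - Y)) ≤ cosh (c * σ) + x / σ * sinh (c * σ) := by
  have h_right : √(Y ^ 2 + 2 * Y * σ + σ ^ 2) = Y + σ := by
    rw [← add_sq, sqrt_sq (by linarith)]
  have h_left : √(Y ^ 2 + 2 * Y * -σ + σ ^ 2) = Y - σ := by
    rw [mul_neg, ← sub_eq_add_neg, ← sub_sq, sqrt_sq (by linarith)]
  have h_chord := le_chord_of_convexOn_Icc_neg hσ
    (convexOn_exp_mul_sqrt_quadratic_sub (hσ.le.trans hσY) hconv) hx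
  rwa [h_right, h_left, add_sub_cancel_left, sub_sub_cancel_left, mul_neg, ← cosh_eq,
    ← sinh_eq] at h_chord

theorem stmt_1_general {σ Y lam s : ℝ} (hσ : 0 < σ) (hlam : 0 < lam)
    (hlamY : 1 ≤ lam * (Y - σ)) (hs : s = -1 ∨ s = 1) {x : ℝ} (hx : x ∈ Set.Icc (-σ) σ) :
    exp (lam * (s * (√(Y ^ 2 + 2 * Y * x + σ ^ 2) - Y))) ≤
      cosh (lam * σ) + s * (x / σ) * sinh (lam * σ) := by
  have hσY : 0 < Y - σ := pos_of_mul_pos_right (by linarith) hlam.le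
  have hconv : ConvexOn ℝ (Set.Ici ((Y - σ) ^ 2)) fun u => exp (lam * s * √u) := by
    rcases hs with rfl | rfl
    · exact (convexOn_exp_mul_sqrt_of_nonpos (by linarith)).subset
        (Set.Ici_subset_Ici.2 (sq_nonneg _)) (convex_Ici _)
    · exact convexOn_exp_mul_sqrt_of_one_le hσY (by rwa [mul_one])
  calc exp (lam * (s * (√(Y ^ 2 + 2 * Y * x + σ ^ 2) - Y)))
      ≤ cosh (lam * s * σ) + x / σ * sinh (lam * s * σ) := by
        rw [← mul_assoc]
        exact exp_mul_sqrt_quadratic_sub_le_cosh_add_sinh hσ (sub_pos.1 hσY).le hconv hx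
    _ = cosh (lam * σ) + s * (x / σ) * sinh (lam * σ) := by
        rcases hs with rfl | rfl <;> simp

/-- the convex function `x ↦ exp (λ D x)` with
`D x = s (√(Y² + 2Yx + σ²) − Y)` lies below the chord connecting its values at `x = ±σ`. -/
theorem stmt_1 (σ Y lam s : ℝ) (hσ : σ ∈ Set.Ioc (0 : ℝ) (1/2)) (hY : 1 ≤ Y)
    (hlam : 0 < lam) (hlamY : 1 ≤ lam * (Y - σ)) (hs : s = -1 ∨ s = 1)
    (D : ℝ → ℝ) (hD : ∀ x, D x = s * (Real.sqrt (Y^2 + 2*Y*x + σ^2) - Y)) :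
    ∀ x ∈ Set.Icc (-σ) σ,
      Real.exp (lam * D x) ≤ Real.cosh (lam * σ) + s * (x / σ) * Real.sinh (lam * σ) := by
  intro x hx
  rw [hD]
  exact stmt_1_general hσ.1 hlam hlamY hs hx
end

section
/- Let A be a symmetric positive definite d×d real matrix, and let γ_t = a·t^{−r} for t ≥ 1, where a > 0 and r ∈ (1/2, 1). For 1 ≤ s ≤ t define the d×d matrix β̄^t_s = γ_s ∑_{i=s}^{t−1} ∏_{k=s+1}^{i} (I − γ_k A), where the empty product ∏_{k=s+1}^{s} is the identity matrix I, and define φ^t_s = β̄^t_s − A^{−1}. Then ∑_{s=1}^{t−1} ‖φ^t_s‖ = O(t^r) as t → ∞, i.e. there exist constants C₀ > 0 and t₀ such that ∑_{s=1}^{t−1} ‖φ^t_s‖ ≤ C₀ t^r for all t ≥ t₀. -/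
open Matrix Real Finset
open scoped Matrix.Norms.L2Operator

/-- The ordered product `∏_{k=s+1}^{i} (I − γ_k A)` (the empty product, for `i ≤ s`,
is the identity matrix). -/
noncomputable def sgdProd {d : ℕ} (A : Matrix (Fin d) (Fin d) ℝ) (γ : ℕ → ℝ)
    (s i : ℕ) : Matrix (Fin d) (Fin d) ℝ :=
  ((List.range (i - s)).map fun j => (1 : Matrix (Fin d) (Fin d) ℝ) - γ (s + 1 + j) • A).prod

/-- `β̄^t_s = γ_s ∑_{i=s}^{t−1} ∏_{k=s+1}^{i} (I − γ_k A)`. -/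
noncomputable def betaBar {d : ℕ} (A : Matrix (Fin d) (Fin d) ℝ) (γ : ℕ → ℝ)
    (t s : ℕ) : Matrix (Fin d) (Fin d) ℝ :=
  γ s • ∑ i ∈ Finset.Icc s (t - 1), sgdProd A γ s i

/-!
Let `M s` be the sum of products in `β̄^t_s = γ_s M s`. It satisfies the backward recursion
`M s = 1 + (1 - γ_{s+1} A) M (s+1)`, `M t = 0`, whence
`φ_s = (γ_s - γ_{s+1}) M s + (1 - γ_{s+1} A) φ_{s+1}`, `φ_t = -A⁻¹`.
A weighted sum `∑ c_s b_s` of a solution of `b_s ≤ g_s + q_{s+1} b_{s+1}` is controlled by the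
solution `u` of the adjoint forward recursion `u_s = c_s + q_s u_{s-1}`, namely by
`∑ u_s g_s + u_t b_t`. With `q_s = ‖1 - γ_s A‖ ≤ 1 - m s^{-r}`, the weights `c_s = s^p` give
`u_s = O(s^{p+r})`. For `b = ‖φ‖` and `c_s = 1` this leaves `∑ |γ_s - γ_{s+1}| s^r ‖M s‖`, which is
`O(∑ s⁻¹ ‖M s‖)`, and for `b = ‖M‖` and `c_s = s⁻¹` it leaves `∑ s^{r-1} = O(t^r)`.
-/

section

open Filter Topology RealInnerProductSpace

section PowerEstimates

lemma rpow_neg_sub_rpow_neg_le {x r : ℝ} (hx : 0 < x) (hr : 0 ≤ r) :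
    x ^ (-r) - (x + 1) ^ (-r) ≤ r * x ^ (-r - 1) := by
  have hx1 : 0 < 1 + x⁻¹ := by positivity
  have bernoulli : 1 - r * x⁻¹ ≤ (1 + x⁻¹) ^ (-r) :=
    calc 1 - r * x⁻¹ ≤ exp (-(r * x⁻¹)) := one_sub_le_exp_neg _
      _ ≤ exp (log (1 + x⁻¹) * -r) := by
        have : log (1 + x⁻¹) ≤ x⁻¹ := by linarith [log_le_sub_one_of_pos hx1]
        exact exp_le_exp.2 (by nlinarith)
      _ = (1 + x⁻¹) ^ (-r) := (rpow_def_of_pos hx1 _).symm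
  have factor : (x + 1) ^ (-r) = x ^ (-r) * (1 + x⁻¹) ^ (-r) := by
    rw [← mul_rpow hx.le hx1.le, mul_add, mul_one, mul_inv_cancel₀ hx.ne']
  calc x ^ (-r) - (x + 1) ^ (-r) = x ^ (-r) * (1 - (1 + x⁻¹) ^ (-r)) := by rw [factor]; ring
    _ ≤ x ^ (-r) * (r * x⁻¹) := by gcongr; linarith
    _ = r * x ^ (-r - 1) := by rw [rpow_sub_one hx.ne']; ring

lemma min_mul_rpow_sub_one_le {x r : ℝ} (hx : 1 ≤ x) (hr : 0 < r) :
    min r 1 * x ^ (r - 1) ≤ x ^ r - (x - 1) ^ r := by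
  have hx0 : 0 < x := by linarith
  have hx1 : 0 ≤ 1 - x⁻¹ := sub_nonneg.2 (inv_le_one_of_one_le₀ hx)
  have bernoulli : (1 - x⁻¹) ^ r ≤ 1 - min r 1 * x⁻¹ :=
    calc (1 - x⁻¹) ^ r ≤ (1 - x⁻¹) ^ min r 1 :=
        rpow_le_rpow_of_exponent_ge' hx1 (sub_le_self 1 (by positivity))
          (le_min hr.le zero_le_one) (min_le_left r 1)
      _ ≤ 1 - min r 1 * x⁻¹ := by
        simpa [sub_eq_add_neg] using rpow_one_add_le_one_add_mul_self (s := -x⁻¹) (by linarith)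
          (le_min hr.le zero_le_one) (min_le_right r 1)
  have factor : (x - 1) ^ r = x ^ r * (1 - x⁻¹) ^ r := by
    rw [← mul_rpow hx0.le hx1, mul_sub, mul_one, mul_inv_cancel₀ hx0.ne']
  calc min r 1 * x ^ (r - 1) = x ^ r * (1 - (1 - min r 1 * x⁻¹)) := by
        rw [rpow_sub_one hx0.ne']; ring
    _ ≤ x ^ r * (1 - (1 - x⁻¹) ^ r) := by gcongr
    _ = x ^ r - (x - 1) ^ r := by rw [factor]; ring

lemma sum_Icc_rpow_sub_one_le {r : ℝ} (hr : 0 < r) (n : ℕ) :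
    ∑ s ∈ Icc 1 n, (s : ℝ) ^ (r - 1) ≤ (min r 1)⁻¹ * (n : ℝ) ^ r := by
  have hmin : 0 < min r 1 := lt_min hr one_pos
  rw [le_inv_mul_iff₀ hmin]
  induction n with
  | zero => simp [zero_rpow hr.ne']
  | succ n ih =>
    have step := min_mul_rpow_sub_one_le (x := (n + 1 : ℕ)) (by simp) hr
    rw [Nat.cast_succ, add_sub_cancel_right, ← Nat.cast_succ] at step
    rw [sum_Icc_succ_top (by omega), mul_add]
    linarith

lemma eventually_mul_inv_le_rpow_neg {r ε : ℝ} (hr0 : 0 ≤ r) (hr1 : r < 1) (hε : 0 < ε) (c : ℝ) :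
    ∀ᶠ x : ℝ in atTop, c * x⁻¹ ≤ ε * (x + 1) ^ (-r) := by
  have hlim : Tendsto (fun x : ℝ => c * 2 ^ r * x ^ (-(1 - r))) atTop (𝓝 0) := by
    simpa using (tendsto_rpow_neg_atTop (sub_pos.2 hr1)).const_mul (c * 2 ^ r)
  filter_upwards [hlim.eventually_le_const hε, eventually_ge_atTop 1] with x hsmall hx
  have hx0 : 0 < x := by linarith
  have split : x⁻¹ = 2 ^ r * x ^ (-(1 - r)) * (2 * x) ^ (-r) := by
    rw [mul_rpow two_pos.le hx0.le, mul_mul_mul_comm, ← rpow_add two_pos, ← rpow_add hx0,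
      add_neg_cancel, rpow_zero, one_mul, ← rpow_neg_one]
    ring_nf
  calc c * x⁻¹ = c * 2 ^ r * x ^ (-(1 - r)) * (2 * x) ^ (-r) := by rw [split]; ring
    _ ≤ ε * (2 * x) ^ (-r) := by gcongr
    _ ≤ ε * (x + 1) ^ (-r) :=
      mul_le_mul_of_nonneg_left
        (rpow_le_rpow_of_nonpos (by linarith) (by linarith) (neg_nonpos.2 hr0)) hε.le

end PowerEstimates

section ForwardRecursion

/-- The solution of the forward recursion `u 0 = 0`, `u (n + 1) = c (n + 1) + q (n + 1) * u n`;
`c 0` and `q 0` are never read. It is adjoint to the backward recursion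
`b n = g n + q (n + 1) * b (n + 1)`. -/
def forwardRec (q c : ℕ → ℝ) : ℕ → ℝ
  | 0 => 0
  | n + 1 => c (n + 1) + q (n + 1) * forwardRec q c n

variable {q c : ℕ → ℝ}

lemma forwardRec_nonneg (hq : ∀ n, 0 ≤ q n) (hc : ∀ n, 0 ≤ c n) (n : ℕ) :
    0 ≤ forwardRec q c n := by
  induction n with
  | zero => exact le_rfl
  | succ n ih => exact add_nonneg (hc _) (mul_nonneg (hq _) ih)

lemma sum_mul_le_sum_forwardRec_mul (hq : ∀ n, 0 ≤ q n) (hc : ∀ n, 0 ≤ c n) {b g : ℕ → ℝ} {t : ℕ}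
    (ht : 1 ≤ t) (hb : ∀ s, 1 ≤ s → s < t → b s ≤ g s + q (s + 1) * b (s + 1)) :
    ∑ s ∈ Icc 1 t, c s * b s
      ≤ ∑ s ∈ Ico 1 t, forwardRec q c s * g s + forwardRec q c t * b t := by
  induction t, ht using Nat.le_induction with
  | base => simp [forwardRec]
  | succ t ht ih =>
    have step := mul_le_mul_of_nonneg_left (hb t ht t.lt_succ_self) (forwardRec_nonneg hq hc t)
    rw [sum_Icc_succ_top (by omega), sum_Ico_succ_top ht, forwardRec]
    linarith [ih fun s hs hst => hb s hs (hst.trans t.lt_succ_self)]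

lemma exists_forwardRec_le_mul (hq : ∀ n, 0 ≤ q n) (hc : ∀ n, 0 ≤ c n) {v : ℕ → ℝ}
    (hv : ∀ n, 1 ≤ n → 0 < v n) (hrec : ∀ᶠ n in atTop, c (n + 1) + q (n + 1) * v n ≤ v (n + 1)) :
    ∃ C > 0, ∀ n, 1 ≤ n → forwardRec q c n ≤ C * v n := by
  obtain ⟨K, hK⟩ := eventually_atTop.1 (hrec.and (eventually_ge_atTop 1))
  have hK1 : 1 ≤ K := (hK K le_rfl).2
  set D : ℝ := max 1 (forwardRec q c K / v K)
  have eventual_bound : ∀ n ≥ K, forwardRec q c n ≤ D * v n := by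
    intro n hn
    induction n, hn using Nat.le_induction with
    | base => exact (div_le_iff₀ (hv K hK1)).1 (le_max_right _ _)
    | succ n hn ih =>
      calc c (n + 1) + q (n + 1) * forwardRec q c n
          ≤ D * c (n + 1) + q (n + 1) * (D * v n) :=
            add_le_add (le_mul_of_one_le_left (hc _) (le_max_left _ _))
              (mul_le_mul_of_nonneg_left ih (hq _))
        _ = D * (c (n + 1) + q (n + 1) * v n) := by ring
        _ ≤ D * v (n + 1) := by gcongr; exact (hK n hn).1
  have isBigO : forwardRec q c =O[atTop] v := by
    refine .of_bound D (eventually_atTop.2 ⟨K, fun n hn => ?_⟩)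
    rw [norm_of_nonneg (forwardRec_nonneg hq hc n), norm_of_nonneg (hv n (hK1.trans hn)).le]
    exact eventual_bound n hn
  obtain ⟨C, hC, bound⟩ := Asymptotics.bound_of_isBigO_nat_atTop isBigO
  refine ⟨C, hC, fun n hn => ?_⟩
  simpa only [norm_of_nonneg (forwardRec_nonneg hq hc n), norm_of_nonneg (hv n hn).le]
    using bound (hv n hn).ne'

variable {m p r : ℝ}

lemma eventually_add_mul_rpow_le_of_nonneg (hq : ∀ n, 0 ≤ q n)
    (hqm : ∀ᶠ n : ℕ in atTop, q n ≤ 1 - m * (n : ℝ) ^ (-r)) (hp : 0 ≤ p) :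
    ∀ᶠ n : ℕ in atTop, m * ((n + 1 : ℕ) : ℝ) ^ (p - r) + q (n + 1) * (n : ℝ) ^ p
      ≤ ((n + 1 : ℕ) : ℝ) ^ p := by
  filter_upwards [(tendsto_add_atTop_nat 1).eventually hqm] with n hn
  have hpos : (0 : ℝ) < (n + 1 : ℕ) := by positivity
  have mono : (n : ℝ) ^ p ≤ ((n + 1 : ℕ) : ℝ) ^ p := by gcongr; exact n.le_succ
  have decay : q (n + 1) * (n : ℝ) ^ p
      ≤ (1 - m * ((n + 1 : ℕ) : ℝ) ^ (-r)) * ((n + 1 : ℕ) : ℝ) ^ p :=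
    mul_le_mul hn mono (by positivity) ((hq _).trans hn)
  have split : ((n + 1 : ℕ) : ℝ) ^ (p - r) = ((n + 1 : ℕ) : ℝ) ^ (-r) * ((n + 1 : ℕ) : ℝ) ^ p := by
    rw [← rpow_add hpos, neg_add_eq_sub]
  rw [split]
  linarith

lemma eventually_add_mul_rpow_le_of_nonpos (hm : 0 < m) (hr0 : 0 ≤ r) (hr1 : r < 1)
    (hqm : ∀ᶠ n : ℕ in atTop, q n ≤ 1 - m * (n : ℝ) ^ (-r)) (hp : p ≤ 0) :
    ∀ᶠ n : ℕ in atTop, m / 2 * ((n + 1 : ℕ) : ℝ) ^ (p - r) + q (n + 1) * (n : ℝ) ^ p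
      ≤ ((n + 1 : ℕ) : ℝ) ^ p := by
  have small := tendsto_natCast_atTop_atTop.eventually
    (eventually_mul_inv_le_rpow_neg hr0 hr1 (half_pos hm) (-p))
  filter_upwards [(tendsto_add_atTop_nat 1).eventually hqm, small, eventually_ge_atTop 1]
    with n hn hsmall hn1
  rw [Nat.cast_succ] at hn ⊢
  have hx : (0 : ℝ) < n := by exact_mod_cast hn1
  generalize (n : ℝ) = x at *
  have mono : (x + 1) ^ p ≤ x ^ p := rpow_le_rpow_of_nonpos hx (by linarith) hp
  have increment : x ^ p - (x + 1) ^ p ≤ m / 2 * (x + 1) ^ (-r) * x ^ p :=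
    calc x ^ p - (x + 1) ^ p ≤ -p * x ^ (p - 1) := by
          simpa using rpow_neg_sub_rpow_neg_le hx (neg_nonneg.2 hp)
      _ = -p * x⁻¹ * x ^ p := by rw [rpow_sub_one hx.ne']; ring
      _ ≤ m / 2 * (x + 1) ^ (-r) * x ^ p := by gcongr
  have forcing : m / 2 * (x + 1) ^ (p - r) ≤ m / 2 * (x + 1) ^ (-r) * x ^ p := by
    rw [← neg_add_eq_sub, rpow_add (by positivity), mul_assoc]
    gcongr
  have decay : q (n + 1) * x ^ p ≤ (1 - m * (x + 1) ^ (-r)) * x ^ p := by gcongr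
  linarith

lemma exists_forwardRec_rpow_le (hq : ∀ n, 0 ≤ q n) (hm : 0 < m) (hr : 0 ≤ r)
    (hqm : ∀ᶠ n : ℕ in atTop, q n ≤ 1 - m * (n : ℝ) ^ (-r)) (hp : 0 ≤ p + r ∨ r < 1) :
    ∃ C > 0, ∀ n : ℕ, 1 ≤ n → forwardRec q (fun k => (k : ℝ) ^ p) n ≤ C * (n : ℝ) ^ (p + r) := by
  obtain ⟨ε, hε, hrec⟩ : ∃ ε > 0, ∀ᶠ n : ℕ in atTop,
      ε * ((n + 1 : ℕ) : ℝ) ^ p + q (n + 1) * (n : ℝ) ^ (p + r) ≤ ((n + 1 : ℕ) : ℝ) ^ (p + r) := by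
    rcases le_or_gt 0 (p + r) with hpr | hpr
    · exact ⟨m, hm, by simpa using eventually_add_mul_rpow_le_of_nonneg hq hqm hpr⟩
    · exact ⟨m / 2, half_pos hm, by
        simpa using eventually_add_mul_rpow_le_of_nonpos hm hr (hp.resolve_left hpr.not_ge) hqm
          hpr.le⟩
  obtain ⟨C, hC, bound⟩ := exists_forwardRec_le_mul (c := fun k => (k : ℝ) ^ p)
    (v := fun n => ε⁻¹ * (n : ℝ) ^ (p + r)) hq (fun n => by positivity) (fun n hn => by positivity)
    (by
      filter_upwards [hrec] with n hn
      rw [mul_left_comm, le_inv_mul_iff₀ hε, mul_add, mul_inv_cancel_left₀ hε.ne']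
      exact hn)
  exact ⟨C * ε⁻¹, by positivity, fun n hn => by simpa only [mul_assoc] using bound n hn⟩

end ForwardRecursion

section NormedAlgebra

variable {R : Type*} [NormedRing R] [NormedAlgebra ℝ R] {A B : R} {γ : ℕ → ℝ} {a m r : ℝ}

lemma smul_sub_eq_smul_add_mul (hAB : A * B = 1) {M M' : R} {x y : ℝ}
    (hM : M = 1 + (1 - y • A) * M') :
    x • M - B = (x - y) • M + (1 - y • A) * (y • M' - B) := by
  have hB : (1 - y • A) * B = B - y • 1 := by rw [sub_mul, one_mul, smul_mul_assoc, hAB]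
  have hyM : y • M = y • 1 + y • ((1 - y • A) * M') := by rw [← smul_add, ← hM]
  rw [sub_smul, mul_sub, mul_smul_comm, hB, hyM]
  abel

lemma exists_sum_rpow_neg_one_mul_norm_le (hm : 0 < m) (hr : 0 < r)
    (hcontr : ∀ᶠ k : ℕ in atTop, ‖1 - γ k • A‖ ≤ 1 - m * (k : ℝ) ^ (-r)) :
    ∃ C ≥ 0, ∀ t, 1 ≤ t → ∀ M : ℕ → R, M t = 0 →
      (∀ s < t, M s = 1 + (1 - γ (s + 1) • A) * M (s + 1)) →
      ∑ s ∈ Icc 1 t, (s : ℝ) ^ (-1 : ℝ) * ‖M s‖ ≤ C * (t : ℝ) ^ r := by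
  have hq : ∀ k, 0 ≤ ‖1 - γ k • A‖ := fun _ => norm_nonneg _
  obtain ⟨C, hC, hu⟩ := exists_forwardRec_rpow_le (p := -1) hq hm hr.le hcontr
    (by rw [neg_add_eq_sub, sub_nonneg]; exact le_or_gt 1 r)
  refine ⟨C * (min r 1)⁻¹ * ‖(1 : R)‖, by positivity, fun t ht M hMt hM => ?_⟩
  set u := forwardRec (fun k => ‖1 - γ k • A‖) fun k => (k : ℝ) ^ (-1 : ℝ)
  have norm_rec : ∀ s, 1 ≤ s → s < t → ‖M s‖ ≤ ‖(1 : R)‖ + ‖1 - γ (s + 1) • A‖ * ‖M (s + 1)‖ := by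
    intro s _ hs
    rw [hM s hs]
    exact norm_add_le_of_le le_rfl (norm_mul_le _ _)
  have sum_u : ∑ s ∈ Ico 1 t, u s ≤ C * ((min r 1)⁻¹ * (t : ℝ) ^ r) :=
    calc ∑ s ∈ Ico 1 t, u s ≤ ∑ s ∈ Ico 1 t, C * (s : ℝ) ^ (r - 1) :=
          sum_le_sum fun s hs => by
            simpa only [neg_add_eq_sub] using hu s (Finset.mem_Ico.1 hs).1
      _ ≤ ∑ s ∈ Icc 1 t, C * (s : ℝ) ^ (r - 1) :=
          sum_le_sum_of_subset_of_nonneg Ico_subset_Icc_self fun _ _ _ => by positivity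
      _ ≤ C * ((min r 1)⁻¹ * (t : ℝ) ^ r) := by
          rw [← mul_sum]
          gcongr
          exact sum_Icc_rpow_sub_one_le hr t
  calc ∑ s ∈ Icc 1 t, (s : ℝ) ^ (-1 : ℝ) * ‖M s‖
      ≤ ∑ s ∈ Ico 1 t, u s * ‖(1 : R)‖ + u t * ‖M t‖ :=
        sum_mul_le_sum_forwardRec_mul hq (fun k => by positivity) ht norm_rec
    _ = (∑ s ∈ Ico 1 t, u s) * ‖(1 : R)‖ := by
        rw [hMt, norm_zero, mul_zero, add_zero, sum_mul]
    _ ≤ C * ((min r 1)⁻¹ * (t : ℝ) ^ r) * ‖(1 : R)‖ := by gcongr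
    _ = C * (min r 1)⁻¹ * ‖(1 : R)‖ * (t : ℝ) ^ r := by ring

lemma abs_stepSize_sub_succ_le (ha : 0 ≤ a) (hr : 0 ≤ r)
    (hγ : ∀ k : ℕ, 1 ≤ k → γ k = a * (k : ℝ) ^ (-r)) {s : ℕ} (hs : 1 ≤ s) :
    |γ s - γ (s + 1)| ≤ a * r * (s : ℝ) ^ (-r - 1) := by
  have hs0 : (0 : ℝ) < s := by exact_mod_cast hs
  have antitone : ((s : ℝ) + 1) ^ (-r) ≤ (s : ℝ) ^ (-r) :=
    rpow_le_rpow_of_nonpos hs0 (by linarith) (by linarith)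
  rw [hγ s hs, hγ (s + 1) (by omega), Nat.cast_succ, ← mul_sub,
    abs_of_nonneg (mul_nonneg ha (sub_nonneg.2 antitone)), mul_assoc]
  exact mul_le_mul_of_nonneg_left (rpow_neg_sub_rpow_neg_le hs0 hr) ha

lemma sum_norm_smul_sub_le_sum_forwardRec_mul (hAB : A * B = 1) {M : ℕ → R} {t : ℕ} (ht : 1 ≤ t)
    (hMt : M t = 0) (hM : ∀ s < t, M s = 1 + (1 - γ (s + 1) • A) * M (s + 1)) :
    ∑ s ∈ Icc 1 t, ‖γ s • M s - B‖
      ≤ ∑ s ∈ Ico 1 t, forwardRec (fun k => ‖1 - γ k • A‖) (fun _ => 1) s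
          * (|γ s - γ (s + 1)| * ‖M s‖)
        + forwardRec (fun k => ‖1 - γ k • A‖) (fun _ => 1) t * ‖B‖ := by
  have norm_rec : ∀ s, 1 ≤ s → s < t → ‖γ s • M s - B‖ ≤ |γ s - γ (s + 1)| * ‖M s‖
      + ‖1 - γ (s + 1) • A‖ * ‖γ (s + 1) • M (s + 1) - B‖ := by
    intro s _ hs
    rw [smul_sub_eq_smul_add_mul hAB (hM s hs)]
    exact norm_add_le_of_le (norm_smul_le _ _) (norm_mul_le _ _)
  have hB : ‖γ t • M t - B‖ = ‖B‖ := by rw [hMt, smul_zero, zero_sub, norm_neg]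
  simpa only [one_mul, hB] using sum_mul_le_sum_forwardRec_mul
    (q := fun k => ‖1 - γ k • A‖) (c := fun _ => 1) (fun _ => norm_nonneg _)
    (fun _ => zero_le_one) ht norm_rec

lemma exists_sum_norm_smul_sub_le (hAB : A * B = 1) (ha : 0 ≤ a) (hm : 0 < m) (hr : 0 < r)
    (hγ : ∀ k : ℕ, 1 ≤ k → γ k = a * (k : ℝ) ^ (-r))
    (hcontr : ∀ᶠ k : ℕ in atTop, ‖1 - γ k • A‖ ≤ 1 - m * (k : ℝ) ^ (-r)) :
    ∃ C ≥ 0, ∀ t, 1 ≤ t → ∀ M : ℕ → R, M t = 0 →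
      (∀ s < t, M s = 1 + (1 - γ (s + 1) • A) * M (s + 1)) →
      ∑ s ∈ Icc 1 t, ‖γ s • M s - B‖ ≤ C * (t : ℝ) ^ r := by
  obtain ⟨C, hC, hu⟩ := exists_forwardRec_rpow_le (p := 0) (fun _ => norm_nonneg _) hm hr.le hcontr
    (.inl (by rw [zero_add]; exact hr.le))
  obtain ⟨D, hD, hsumM⟩ := exists_sum_rpow_neg_one_mul_norm_le hm hr hcontr
  simp only [rpow_zero, zero_add] at hu
  refine ⟨C * (a * r) * D + C * ‖B‖, by positivity, fun t ht M hMt hM => ?_⟩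
  set u := forwardRec (fun k => ‖1 - γ k • A‖) fun _ => 1
  have forcing : ∀ s ∈ Ico 1 t, u s * (|γ s - γ (s + 1)| * ‖M s‖)
      ≤ C * (a * r) * ((s : ℝ) ^ (-1 : ℝ) * ‖M s‖) := by
    intro s hs
    have hs1 := (Finset.mem_Ico.1 hs).1
    have hs0 : (0 : ℝ) < s := by exact_mod_cast hs1
    calc u s * (|γ s - γ (s + 1)| * ‖M s‖)
        ≤ C * (s : ℝ) ^ r * (a * r * (s : ℝ) ^ (-r - 1) * ‖M s‖) := by
          gcongr
          exacts [hu s hs1, abs_stepSize_sub_succ_le ha hr.le hγ hs1]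
      _ = C * (a * r) * ((s : ℝ) ^ (r + (-r - 1)) * ‖M s‖) := by rw [rpow_add hs0]; ring
      _ = C * (a * r) * ((s : ℝ) ^ (-1 : ℝ) * ‖M s‖) := by rw [add_sub, add_neg_cancel, zero_sub]
  calc ∑ s ∈ Icc 1 t, ‖γ s • M s - B‖
      ≤ ∑ s ∈ Ico 1 t, u s * (|γ s - γ (s + 1)| * ‖M s‖) + u t * ‖B‖ :=
        sum_norm_smul_sub_le_sum_forwardRec_mul hAB ht hMt hM
    _ ≤ ∑ s ∈ Icc 1 t, C * (a * r) * ((s : ℝ) ^ (-1 : ℝ) * ‖M s‖) + C * (t : ℝ) ^ r * ‖B‖ := by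
        gcongr
        · exact (sum_le_sum forcing).trans
            (sum_le_sum_of_subset_of_nonneg Ico_subset_Icc_self fun _ _ _ => by positivity)
        · exact hu t ht
    _ ≤ C * (a * r) * (D * (t : ℝ) ^ r) + C * (t : ℝ) ^ r * ‖B‖ := by
        rw [← mul_sum]
        gcongr
        exact hsumM t ht M hMt hM
    _ = (C * (a * r) * D + C * ‖B‖) * (t : ℝ) ^ r := by ring

end NormedAlgebra

section Coercive

variable {E : Type*} [NormedAddCommGroup E] [InnerProductSpace ℝ E] {T : E →L[ℝ] E}

lemma norm_one_sub_smul_le_of_coercive {μ g : ℝ} (hT : ∀ x, μ * ‖x‖ ^ 2 ≤ ⟪x, T x⟫)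
    (hg : 0 ≤ g) (hgT : g * ‖T‖ ^ 2 ≤ μ) (hgμ : g * μ ≤ 2) :
    ‖1 - g • T‖ ≤ 1 - μ / 2 * g := by
  refine ContinuousLinearMap.opNorm_le_bound _ (by linarith) fun x => ?_
  rw [← sq_le_sq₀ (norm_nonneg _) (mul_nonneg (by linarith) (norm_nonneg x))]
  have hTx : g * ‖T x‖ ^ 2 ≤ μ * ‖x‖ ^ 2 :=
    calc g * ‖T x‖ ^ 2 ≤ g * (‖T‖ * ‖x‖) ^ 2 := by gcongr; exact T.le_opNorm x
      _ = g * ‖T‖ ^ 2 * ‖x‖ ^ 2 := by ring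
      _ ≤ μ * ‖x‖ ^ 2 := by gcongr
  calc ‖x - g • T x‖ ^ 2 = ‖x‖ ^ 2 - 2 * g * ⟪x, T x⟫ + g * (g * ‖T x‖ ^ 2) := by
        rw [norm_sub_sq_real, inner_smul_right, norm_smul, mul_pow, norm_eq_abs, sq_abs]; ring
    _ ≤ ‖x‖ ^ 2 - 2 * g * (μ * ‖x‖ ^ 2) + g * (μ * ‖x‖ ^ 2) :=
        add_le_add (sub_le_sub_left (mul_le_mul_of_nonneg_left (hT x) (by positivity)) _)
          (mul_le_mul_of_nonneg_left hTx hg)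
    _ ≤ ((1 - μ / 2 * g) * ‖x‖) ^ 2 := by linarith [sq_nonneg (μ * g * ‖x‖)]

lemma exists_coercive_of_inner_pos [FiniteDimensional ℝ E] (hT : ∀ x ≠ 0, 0 < ⟪x, T x⟫) :
    ∃ μ > 0, ∀ x, μ * ‖x‖ ^ 2 ≤ ⟪x, T x⟫ := by
  obtain ⟨μ, hμ, hsphere⟩ := (isCompact_sphere (0 : E) 1).exists_forall_le'
    (f := fun x => ⟪x, T x⟫) (by fun_prop)
    fun x hx => hT x (ne_zero_of_mem_unit_sphere ⟨x, hx⟩)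
  refine ⟨μ, hμ, fun x => ?_⟩
  rcases eq_or_ne x 0 with rfl | hx
  · simp
  · have hnorm : 0 < ‖x‖ := norm_pos_iff.2 hx
    have hunit := hsphere (‖x‖⁻¹ • x) (by simp [norm_smul, hnorm.ne'])
    rw [map_smul, real_inner_smul_left, real_inner_smul_right, ← mul_assoc, ← sq, inv_pow,
      le_inv_mul_iff₀ (by positivity), mul_comm] at hunit
    exact hunit

end Coercive

section Matrices

variable {n : Type*} [Fintype n] [DecidableEq n] {A : Matrix n n ℝ}

lemma isUnit_det_of_dotProduct_mulVec_pos (hA : ∀ x ≠ 0, 0 < x ⬝ᵥ A *ᵥ x) : IsUnit A.det := by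
  rw [isUnit_iff_ne_zero, ne_eq, ← exists_mulVec_eq_zero_iff]
  rintro ⟨x, hx, hAx⟩
  simpa [hAx] using hA x hx

lemma exists_norm_one_sub_smul_le (hA : ∀ x ≠ 0, 0 < x ⬝ᵥ A *ᵥ x) :
    ∃ m > 0, ∀ᶠ g : ℝ in 𝓝[≥] 0, ‖1 - g • A‖ ≤ 1 - m * g := by
  obtain ⟨μ, hμ, hcoercive⟩ := exists_coercive_of_inner_pos (T := toEuclideanCLM (𝕜 := ℝ) A)
    fun x hx => by rw [inner_toEuclideanCLM]; exact hA x.ofLp (by simpa using hx)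
  have small {ε : ℝ} (hε : 0 < ε) (c : ℝ) : ∀ᶠ g : ℝ in 𝓝[≥] 0, g * c ≤ ε :=
    nhdsWithin_le_nhds <|
      (show ContinuousAt (fun g : ℝ => g * c) 0 by fun_prop).eventually_le_const (by simpa)
  refine ⟨μ / 2, half_pos hμ, ?_⟩
  filter_upwards [self_mem_nhdsWithin, small hμ (‖A‖ ^ 2), small two_pos μ] with g hg hgA hgμ
  rw [← l2_opNorm_toEuclideanCLM, map_sub, map_one, map_smul]
  exact norm_one_sub_smul_le_of_coercive hcoercive hg hgA hgμ

lemma exists_norm_one_sub_stepSize_smul_le (hA : ∀ x ≠ 0, 0 < x ⬝ᵥ A *ᵥ x) {a r : ℝ} (ha : 0 < a)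
    (hr : 0 < r) {γ : ℕ → ℝ} (hγ : ∀ k : ℕ, 1 ≤ k → γ k = a * (k : ℝ) ^ (-r)) :
    ∃ m > 0, ∀ᶠ k : ℕ in atTop, ‖1 - γ k • A‖ ≤ 1 - m * (k : ℝ) ^ (-r) := by
  obtain ⟨m, hm, hcontr⟩ := exists_norm_one_sub_smul_le hA
  have tendsto_zero : Tendsto (fun k : ℕ => a * (k : ℝ) ^ (-r)) atTop (𝓝 0) := by
    simpa using ((tendsto_rpow_neg_atTop hr).comp tendsto_natCast_atTop_atTop).const_mul a
  have tendsto_zero_right : Tendsto (fun k : ℕ => a * (k : ℝ) ^ (-r)) atTop (𝓝[≥] 0) :=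
    tendsto_nhdsWithin_iff.2 ⟨tendsto_zero, .of_forall fun k => Set.mem_Ici.2 (by positivity)⟩
  refine ⟨m * a, mul_pos hm ha, ?_⟩
  filter_upwards [tendsto_zero_right.eventually hcontr, eventually_ge_atTop 1] with k hk hk1
  rwa [hγ k hk1, mul_assoc m]

end Matrices

section Sgd

variable {d : ℕ} (A : Matrix (Fin d) (Fin d) ℝ) (γ : ℕ → ℝ)

lemma sgdProd_self (s : ℕ) : sgdProd A γ s s = 1 := by
  simp [sgdProd]

lemma sgdProd_eq_mul_sgdProd_succ {s i : ℕ} (h : s < i) :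
    sgdProd A γ s i = (1 - γ (s + 1) • A) * sgdProd A γ (s + 1) i := by
  rw [sgdProd, sgdProd, show i - s = i - (s + 1) + 1 by omega, List.range_succ_eq_map,
    List.map_cons, List.prod_cons, List.map_map]
  simp only [Function.comp_def, add_zero, Nat.succ_eq_add_one, add_assoc, add_comm 1]

lemma sum_sgdProd_eq_one_add_mul {s t : ℕ} (h : s < t) :
    ∑ i ∈ Icc s (t - 1), sgdProd A γ s i
      = 1 + (1 - γ (s + 1) • A) * ∑ i ∈ Icc (s + 1) (t - 1), sgdProd A γ (s + 1) i := by
  rw [← add_sum_Ioc_eq_sum_Icc (by omega : s ≤ t - 1), sgdProd_self, ← Icc_add_one_left_eq_Ioc,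
    mul_sum]
  exact congrArg _ <| sum_congr rfl fun i hi =>
    sgdProd_eq_mul_sgdProd_succ A γ (Finset.mem_Icc.1 hi).1

end Sgd

theorem stmt_2_general (d : ℕ) (A : Matrix (Fin d) (Fin d) ℝ) (hA : ∀ x ≠ 0, 0 < x ⬝ᵥ A *ᵥ x)
    (a r : ℝ) (ha : 0 < a) (hr : 0 < r)
    (γ : ℕ → ℝ) (hγ : ∀ t : ℕ, 1 ≤ t → γ t = a * (t : ℝ) ^ (-r))
    (φ : ℕ → ℕ → Matrix (Fin d) (Fin d) ℝ)
    (hφ : ∀ t s : ℕ, 1 ≤ s → s ≤ t → φ t s = betaBar A γ t s - A⁻¹) :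
    ∃ C₀ > (0 : ℝ), ∃ t₀ : ℕ, ∀ t ≥ t₀,
      ∑ s ∈ Icc 1 (t - 1), ‖φ t s‖ ≤ C₀ * (t : ℝ) ^ r := by
  obtain ⟨m, hm, hcontr⟩ := exists_norm_one_sub_stepSize_smul_le hA ha hr hγ
  obtain ⟨C, hC, bound⟩ := exists_sum_norm_smul_sub_le
    (mul_nonsing_inv A (isUnit_det_of_dotProduct_mulVec_pos hA)) ha.le hm hr hγ hcontr
  refine ⟨C + 1, by positivity, 1, fun t ht => ?_⟩
  calc ∑ s ∈ Icc 1 (t - 1), ‖φ t s‖ ≤ ∑ s ∈ Icc 1 t, ‖φ t s‖ :=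
        sum_le_sum_of_subset_of_nonneg (Icc_subset_Icc_right (t.sub_le 1))
          fun _ _ _ => norm_nonneg _
    _ = ∑ s ∈ Icc 1 t, ‖betaBar A γ t s - A⁻¹‖ :=
        sum_congr rfl fun s hs => by
          rw [hφ t s (Finset.mem_Icc.1 hs).1 (Finset.mem_Icc.1 hs).2]
    _ ≤ C * (t : ℝ) ^ r :=
        bound t ht (fun s => ∑ i ∈ Icc s (t - 1), sgdProd A γ s i)
          (by rw [Icc_eq_empty (by omega), sum_empty])
          fun s hs => sum_sgdProd_eq_one_add_mul A γ hs
    _ ≤ (C + 1) * (t : ℝ) ^ r := by gcongr; linarith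

end

/-- with `φ^t_s = β̄^t_s − A⁻¹` and step sizes `γ_t = a t^{−r}`,
`∑_{s=1}^{t−1} ‖φ^t_s‖ = O(t^r)` in the operator (spectral) norm. -/
theorem stmt_2 (d : ℕ) (A : Matrix (Fin d) (Fin d) ℝ) (hA : A.PosDef)
    (a r : ℝ) (ha : 0 < a) (hr : 1/2 < r) (hr1 : r < 1)
    (γ : ℕ → ℝ) (hγ : ∀ t : ℕ, 1 ≤ t → γ t = a * (t : ℝ) ^ (-r))
    (φ : ℕ → ℕ → Matrix (Fin d) (Fin d) ℝ)
    (hφ : ∀ t s : ℕ, 1 ≤ s → s ≤ t → φ t s = betaBar A γ t s - A⁻¹) :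
    ∃ C₀ > (0 : ℝ), ∃ t₀ : ℕ, ∀ t ≥ t₀,
      ∑ s ∈ Finset.Icc 1 (t - 1), ‖φ t s‖ ≤ C₀ * (t : ℝ) ^ r := by
  exact stmt_2_general d A (fun x hx => by simpa using hA.dotProduct_mulVec_pos hx) a r ha
    (by linarith) γ hγ φ hφ
end

section
/- Let (ξ_t)_{t≥1} be an ℝ^d-valued martingale-difference sequence with respect to a filtration (F_t) (i.e., ξ_t is F_t-measurable and E[ξ_t | F_{t−1}] = 0), satisfying ‖ξ_t‖ ≤ M almost surely for some constant M > 0. Let r ∈ (1/2, 1), and for each t ≥ 1 and 1 ≤ s ≤ t let φ^t_s be deterministic d×d matrices satisfying ‖φ^t_s‖ ≤ K for all s, t and ∑_{s=1}^{t} ‖φ^t_s‖ ≤ C′ t^r for all t, for some constants K, C′ > 0. Then for every T > 0 and every δ > 0, P( max_{1 ≤ t ≤ ⌊nT⌋} ‖ n^{−1/2} ∑_{i=1}^{t} φ^t_i ξ_i ‖ ≥ δ ) → 0 as n → ∞. -/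
open MeasureTheory Matrix Real Filter
open scoped Matrix.Norms.L2Operator

/-- Matrix-vector multiplication on Euclidean space. -/
noncomputable def mvE {d : ℕ} (A : Matrix (Fin d) (Fin d) ℝ)
    (v : EuclideanSpace ℝ (Fin d)) : EuclideanSpace ℝ (Fin d) :=
  (WithLp.equiv 2 (Fin d → ℝ)).symm (A.mulVec ((WithLp.equiv 2 (Fin d → ℝ)) v))

/-!
For `x` in a Hilbert space with `‖x‖ ≤ c`, convexity of `u ↦ cosh √u` along
`‖s + x‖² ≤ ‖s‖² + c² + 2⟪s, x⟫` gives `cosh ‖s + x‖ ≤ cosh ‖s‖ cosh c + (a term linear in x)`.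
The linear term integrates to zero against a martingale difference, so `E cosh (λ‖S‖)` grows by at
most `cosh (λc) ≤ exp (λ²c²/2)` per step. This yields Pinelis' dimension-free Azuma inequality
`P(‖S‖ ≥ ε) ≤ 2 exp (-ε² / (2 ∑ cᵢ²))`.

For `S = ∑ᵢ φᵗᵢ ξᵢ` with `t ≤ nT`, one has `∑ cᵢ² ≤ M² K ∑ᵢ ‖φᵗᵢ‖ = O(n ^ r)`, so at level
`ε = δ √n` each `t` contributes at most `2 exp (-b n ^ (1 - r))`. A union bound over the `⌊nT⌋`
values of `t` suffices since `r < 1`.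
-/

section Cosh

lemma exp_le_two_mul_cosh (x : ℝ) : exp x ≤ 2 * cosh x := by
  rw [cosh_eq]
  linarith [exp_pos (-x)]

lemma hasSum_cosh_sqrt {u : ℝ} (hu : 0 ≤ u) :
    HasSum (fun n : ℕ => u ^ n / ((2 * n).factorial : ℝ)) (cosh √u) := by
  simpa only [pow_mul, sq_sqrt hu] using hasSum_cosh √u

lemma convexOn_cosh_sqrt : ConvexOn ℝ (Set.Ici 0) fun u => cosh √u := by
  refine ⟨convex_Ici 0, fun u hu v hv a b ha hb hab => ?_⟩
  have hw : a • u + b • v ∈ Set.Ici (0 : ℝ) := convex_Ici 0 hu hv ha hb hab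
  refine hasSum_le (fun n => ?_) (hasSum_cosh_sqrt hw)
    (((hasSum_cosh_sqrt hu).const_smul a).add ((hasSum_cosh_sqrt hv).const_smul b))
  have hpow := (convexOn_pow n).2 hu hv ha hb hab
  simp only [smul_eq_mul] at hpow ⊢
  calc (a * u + b * v) ^ n / ((2 * n).factorial : ℝ)
      ≤ (a * u ^ n + b * v ^ n) / ((2 * n).factorial : ℝ) := by gcongr
    _ = a * (u ^ n / ((2 * n).factorial : ℝ)) + b * (v ^ n / ((2 * n).factorial : ℝ)) := by ring

-- If `a * c = 0` the quotient is the junk value `0`; then `y = 0` as well, so the bound is honest.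
lemma cosh_sqrt_sq_add_sq_add_le {a c y : ℝ} (ha : 0 ≤ a) (hc : 0 ≤ c) (hy : |y| ≤ a * c) :
    cosh √(a ^ 2 + c ^ 2 + 2 * y) ≤ cosh a * cosh c + y / (a * c) * (sinh a * sinh c) := by
  set τ := y / (a * c) with hτ
  have hyτ : y = τ * (a * c) := by
    rcases eq_or_ne (a * c) 0 with h | h
    · rw [h, abs_nonpos_iff] at hy
      rw [h, hy, mul_zero]
    · rw [hτ, div_mul_cancel₀ y h]
  have hτ_abs : |τ| ≤ 1 := by
    rw [hτ, abs_div, abs_of_nonneg (mul_nonneg ha hc)]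
    exact div_le_one_of_le₀ hy (mul_nonneg ha hc)
  obtain ⟨hτ_ge, hτ_le⟩ := abs_le.1 hτ_abs
  have hchord := convexOn_cosh_sqrt.2 (sq_nonneg (a + c)) (sq_nonneg (a - c))
    (show 0 ≤ (1 + τ) / 2 by linarith) (show 0 ≤ (1 - τ) / 2 by linarith) (by ring)
  simp only [smul_eq_mul, sqrt_sq_eq_abs, cosh_abs, cosh_add, cosh_sub] at hchord
  calc cosh √(a ^ 2 + c ^ 2 + 2 * y)
      = cosh √((1 + τ) / 2 * (a + c) ^ 2 + (1 - τ) / 2 * (a - c) ^ 2) := by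
        rw [hyτ]; ring_nf
    _ ≤ _ := hchord
    _ = cosh a * cosh c + τ * (sinh a * sinh c) := by ring

lemma cosh_norm_add_le {F : Type*} [NormedAddCommGroup F] [InnerProductSpace ℝ F]
    (s : F) {x : F} {c : ℝ} (hx : ‖x‖ ≤ c) :
    cosh ‖s + x‖ ≤ cosh ‖s‖ * cosh c + sinh c / c * inner ℝ ((sinh ‖s‖ / ‖s‖) • s) x := by
  have hc : 0 ≤ c := (norm_nonneg x).trans hx
  have hinner : |inner ℝ s x| ≤ ‖s‖ * c := (abs_real_inner_le_norm s x).trans (by gcongr)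
  have hnorm : ‖s + x‖ ≤ √(‖s‖ ^ 2 + c ^ 2 + 2 * inner ℝ s x) := by
    refine le_sqrt_of_sq_le ?_
    rw [norm_add_sq_real]
    linarith [pow_le_pow_left₀ (norm_nonneg x) hx 2]
  calc cosh ‖s + x‖
      ≤ cosh √(‖s‖ ^ 2 + c ^ 2 + 2 * inner ℝ s x) := by
        rwa [cosh_le_cosh, abs_norm, abs_of_nonneg (sqrt_nonneg _)]
    _ ≤ _ := cosh_sqrt_sq_add_sq_add_le (norm_nonneg s) hc hinner
    _ = cosh ‖s‖ * cosh c + sinh c / c * inner ℝ ((sinh ‖s‖ / ‖s‖) • s) x := by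
        rw [real_inner_smul_left]; ring

end Cosh

section ConditionallyCentered

variable {Ω F : Type*} {m m0 : MeasurableSpace Ω} {μ : Measure Ω} [NormedAddCommGroup F]

lemma integrable_cosh_norm [IsFiniteMeasure μ] {Z : Ω → F} {b : ℝ}
    (hZ : AEStronglyMeasurable Z μ) (hb : ∀ᵐ ω ∂μ, ‖Z ω‖ ≤ b) :
    Integrable (fun ω => cosh ‖Z ω‖) μ := by
  refine .of_bound (continuous_cosh.comp_aestronglyMeasurable hZ.norm) (cosh b) ?_
  filter_upwards [hb] with ω hω
  rw [norm_of_nonneg (cosh_pos _).le, cosh_le_cosh, abs_norm]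
  exact hω.trans (le_abs_self b)

variable [InnerProductSpace ℝ F]

lemma integrable_inner_of_bound {G X : Ω → F} {b : ℝ} (hG : AEStronglyMeasurable G μ)
    (hGb : ∀ᵐ ω ∂μ, ‖G ω‖ ≤ b) (hX : Integrable X μ) :
    Integrable (fun ω => inner ℝ (G ω) (X ω)) μ :=
  (innerSL ℝ).integrable_of_bilin_of_bdd_left b hG hGb hX

variable [IsFiniteMeasure μ] [CompleteSpace F]

lemma integral_inner_eq_zero_of_condExp_eq_zero (hm : m ≤ m0) {G X : Ω → F} {b : ℝ}
    (hG : StronglyMeasurable[m] G) (hGb : ∀ᵐ ω ∂μ, ‖G ω‖ ≤ b) (hX : Integrable X μ)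
    (hX0 : μ[X | m] =ᵐ[μ] 0) : ∫ ω, inner ℝ (G ω) (X ω) ∂μ = 0 := by
  have hpull : μ[fun ω => inner ℝ (G ω) (X ω) | m] =ᵐ[μ] fun ω => inner ℝ (G ω) (μ[X | m] ω) :=
    condExp_bilin_of_stronglyMeasurable_left (innerSL ℝ) hG
      (integrable_inner_of_bound (hG.mono hm).aestronglyMeasurable hGb hX) hX
  rw [← integral_condExp hm]
  refine integral_eq_zero_of_ae ?_
  filter_upwards [hpull, hX0] with ω hω hω0
  rw [hω, hω0, Pi.zero_apply, inner_zero_right, Pi.zero_apply]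

lemma integral_cosh_norm_add_le (hm : m ≤ m0) {S X : Ω → F} {b c : ℝ}
    (hS : StronglyMeasurable[m] S) (hSb : ∀ᵐ ω ∂μ, ‖S ω‖ ≤ b) (hX : Integrable X μ)
    (hXc : ∀ᵐ ω ∂μ, ‖X ω‖ ≤ c) (hX0 : μ[X | m] =ᵐ[μ] 0) :
    ∫ ω, cosh ‖S ω + X ω‖ ∂μ ≤ cosh c * ∫ ω, cosh ‖S ω‖ ∂μ := by
  set G : Ω → F := fun ω => (sinh ‖S ω‖ / ‖S ω‖) • S ω with hG_def
  have hG : StronglyMeasurable[m] G :=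
    ((continuous_sinh.comp_stronglyMeasurable hS.norm).div hS.norm).smul hS
  have hGb : ∀ᵐ ω ∂μ, ‖G ω‖ ≤ sinh b := by
    filter_upwards [hSb] with ω hω
    rcases (norm_nonneg (S ω)).eq_or_lt' with h | h
    · simpa [hG_def, h] using hω
    · rw [norm_smul, norm_div, norm_norm, div_mul_cancel₀ _ h.ne',
        norm_of_nonneg (sinh_nonneg_iff.2 h.le), sinh_le_sinh]
      exact hω
  have hS0 : AEStronglyMeasurable S μ := (hS.mono hm).aestronglyMeasurable
  have hcosh : Integrable (fun ω => cosh ‖S ω‖ * cosh c) μ :=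
    (integrable_cosh_norm hS0 hSb).mul_const _
  have hinner : Integrable (fun ω => sinh c / c * inner ℝ (G ω) (X ω)) μ :=
    (integrable_inner_of_bound (hG.mono hm).aestronglyMeasurable hGb hX).const_mul _
  have hsum_le : ∀ᵐ ω ∂μ, ‖S ω + X ω‖ ≤ b + c := by
    filter_upwards [hSb, hXc] with ω hSω hXω using norm_add_le_of_le hSω hXω
  calc ∫ ω, cosh ‖S ω + X ω‖ ∂μ
      ≤ ∫ ω, (cosh ‖S ω‖ * cosh c + sinh c / c * inner ℝ (G ω) (X ω)) ∂μ := by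
        refine integral_mono_ae (integrable_cosh_norm (hS0.add hX.1) hsum_le)
          (hcosh.add hinner) ?_
        filter_upwards [hXc] with ω hω using cosh_norm_add_le (S ω) hω
    _ = cosh c * ∫ ω, cosh ‖S ω‖ ∂μ := by
        rw [integral_add hcosh hinner, integral_mul_const, integral_const_mul,
          integral_inner_eq_zero_of_condExp_eq_zero hm hG hGb hX hX0, mul_zero, add_zero, mul_comm]

end ConditionallyCentered

/-- `X 1, X 2, …` is a martingale-difference sequence for `ℱ` with almost sure bounds
`‖X t‖ ≤ c t`. The value `X 0` is unconstrained: `ℱ 0` is the information available before `X 1`. -/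
structure IsBoundedMartingaleDifference {Ω E : Type*} {m0 : MeasurableSpace Ω}
    [NormedAddCommGroup E] [NormedSpace ℝ E]
    (μ : Measure Ω) (ℱ : Filtration ℕ m0) (X : ℕ → Ω → E) (c : ℕ → ℝ) : Prop where
  stronglyMeasurable : ∀ t, StronglyMeasurable[ℱ (t + 1)] (X (t + 1))
  condExp_eq_zero : ∀ t, μ[X (t + 1) | ℱ t] =ᵐ[μ] 0
  norm_le : ∀ t, ∀ᵐ ω ∂μ, ‖X (t + 1) ω‖ ≤ c (t + 1)

namespace IsBoundedMartingaleDifference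

section Banach

variable {Ω E F : Type*} {m0 : MeasurableSpace Ω} {μ : Measure Ω} {ℱ : Filtration ℕ m0}
  [NormedAddCommGroup E] [NormedSpace ℝ E] [NormedAddCommGroup F] [NormedSpace ℝ F]
  {X : ℕ → Ω → E} {c : ℕ → ℝ}

lemma stronglyMeasurable_sum (hX : IsBoundedMartingaleDifference μ ℱ X c) (t : ℕ) :
    StronglyMeasurable[ℱ t] fun ω => ∑ i ∈ Finset.Icc 1 t, X i ω := by
  refine Finset.stronglyMeasurable_fun_sum _ fun i hi => ?_
  obtain ⟨h1i, hit⟩ := Finset.mem_Icc.1 hi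
  obtain ⟨j, rfl⟩ := Nat.exists_eq_add_of_le' h1i
  exact (hX.stronglyMeasurable j).mono (ℱ.mono hit)

lemma norm_sum_le (hX : IsBoundedMartingaleDifference μ ℱ X c) (t : ℕ) :
    ∀ᵐ ω ∂μ, ‖∑ i ∈ Finset.Icc 1 t, X i ω‖ ≤ ∑ i ∈ Finset.Icc 1 t, c i := by
  filter_upwards [ae_all_iff.2 hX.norm_le] with ω hω
  refine norm_sum_le_of_le _ fun i hi => ?_
  obtain ⟨j, rfl⟩ := Nat.exists_eq_add_of_le' (Finset.mem_Icc.1 hi).1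
  exact hω j

lemma integrable [IsFiniteMeasure μ] (hX : IsBoundedMartingaleDifference μ ℱ X c) (t : ℕ) :
    Integrable (X (t + 1)) μ :=
  .of_bound ((hX.stronglyMeasurable t).mono (ℱ.le _)).aestronglyMeasurable _ (hX.norm_le t)

variable [CompleteSpace E]

lemma const_smul (hX : IsBoundedMartingaleDifference μ ℱ X c) (l : ℝ) :
    IsBoundedMartingaleDifference μ ℱ (fun t => l • X t) (fun t => |l| * c t) where
  stronglyMeasurable t := (hX.stronglyMeasurable t).const_smul l
  condExp_eq_zero t := by
    filter_upwards [condExp_smul l (X (t + 1)) (ℱ t), hX.condExp_eq_zero t] with ω hω hω0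
    rw [hω, Pi.smul_apply, hω0, Pi.zero_apply, smul_zero]
  norm_le t := by
    filter_upwards [hX.norm_le t] with ω hω
    rw [Pi.smul_apply, norm_smul, norm_eq_abs]
    gcongr

lemma clm_apply [IsFiniteMeasure μ] [CompleteSpace F]
    (hX : IsBoundedMartingaleDifference μ ℱ X c) (L : ℕ → E →L[ℝ] F) :
    IsBoundedMartingaleDifference μ ℱ (fun t ω => L t (X t ω)) (fun t => ‖L t‖ * c t) where
  stronglyMeasurable t := (L (t + 1)).continuous.comp_stronglyMeasurable (hX.stronglyMeasurable t)
  condExp_eq_zero t := by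
    filter_upwards [(L (t + 1)).comp_condExp_comm (m := ℱ t) (hX.integrable t),
      hX.condExp_eq_zero t] with ω hω hω0
    exact hω.symm.trans (by rw [Function.comp_apply, hω0, Pi.zero_apply, map_zero, Pi.zero_apply])
  norm_le t := by
    filter_upwards [hX.norm_le t] with ω hω using (L (t + 1)).le_opNorm_of_le hω

end Banach

section Hilbert

variable {Ω E F : Type*} {m0 : MeasurableSpace Ω} {μ : Measure Ω} [IsProbabilityMeasure μ]
  {ℱ : Filtration ℕ m0} [NormedAddCommGroup E] [NormedSpace ℝ E] [CompleteSpace E]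
  [NormedAddCommGroup F] [InnerProductSpace ℝ F] [CompleteSpace F]
  {X : ℕ → Ω → E} {Y : ℕ → Ω → F} {c : ℕ → ℝ}

lemma integral_cosh_norm_sum_le (hY : IsBoundedMartingaleDifference μ ℱ Y c) (t : ℕ) :
    ∫ ω, cosh ‖∑ i ∈ Finset.Icc 1 t, Y i ω‖ ∂μ ≤ exp ((∑ i ∈ Finset.Icc 1 t, c i ^ 2) / 2) := by
  induction t with
  | zero => simp
  | succ t ih =>
    simp only [Finset.sum_Icc_succ_top t.succ_pos]
    calc ∫ ω, cosh ‖∑ i ∈ Finset.Icc 1 t, Y i ω + Y (t + 1) ω‖ ∂μ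
        ≤ cosh (c (t + 1)) * ∫ ω, cosh ‖∑ i ∈ Finset.Icc 1 t, Y i ω‖ ∂μ :=
          integral_cosh_norm_add_le (ℱ.le t) (hY.stronglyMeasurable_sum t) (hY.norm_sum_le t)
            (hY.integrable t) (hY.norm_le t) (hY.condExp_eq_zero t)
      _ ≤ exp (c (t + 1) ^ 2 / 2) * exp ((∑ i ∈ Finset.Icc 1 t, c i ^ 2) / 2) := by
          gcongr
          exact cosh_le_exp_half_sq _
      _ = exp ((∑ i ∈ Finset.Icc 1 t, c i ^ 2 + c (t + 1) ^ 2) / 2) := by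
          rw [← exp_add]; ring_nf

lemma measureReal_le_norm_sum_le_exp (hY : IsBoundedMartingaleDifference μ ℱ Y c) (t : ℕ)
    {l : ℝ} (hl : 0 ≤ l) {ε : ℝ} (hε : 0 ≤ ε) :
    μ.real {ω | ε ≤ ‖∑ i ∈ Finset.Icc 1 t, Y i ω‖} ≤
      2 * exp (l ^ 2 / 2 * ∑ i ∈ Finset.Icc 1 t, c i ^ 2 - l * ε) := by
  have hlY := hY.const_smul l
  have hsub : {ω | ε ≤ ‖∑ i ∈ Finset.Icc 1 t, Y i ω‖} ⊆
      {ω | cosh (l * ε) ≤ cosh ‖∑ i ∈ Finset.Icc 1 t, (l • Y i) ω‖} := fun ω hω => by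
    simp only [Set.mem_ofPred_eq, Pi.smul_apply, ← Finset.smul_sum, norm_smul, norm_of_nonneg hl]
    rw [cosh_le_cosh, abs_of_nonneg (by positivity), abs_of_nonneg (by positivity)]
    exact mul_le_mul_of_nonneg_left hω hl
  have hmarkov := mul_meas_ge_le_integral_of_nonneg (ae_of_all μ fun ω => (cosh_pos _).le)
    (integrable_cosh_norm ((hlY.stronglyMeasurable_sum t).mono (ℱ.le t)).aestronglyMeasurable
      (hlY.norm_sum_le t)) (cosh (l * ε))
  have hmgf : ∫ ω, cosh ‖∑ i ∈ Finset.Icc 1 t, (l • Y i) ω‖ ∂μ ≤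
      exp (l ^ 2 / 2 * ∑ i ∈ Finset.Icc 1 t, c i ^ 2) := by
    refine (hlY.integral_cosh_norm_sum_le t).trans_eq ?_
    simp only [mul_pow, sq_abs, ← Finset.mul_sum]
    ring_nf
  rw [exp_sub, mul_div_assoc', le_div_iff₀ (exp_pos _)]
  calc μ.real {ω | ε ≤ ‖∑ i ∈ Finset.Icc 1 t, Y i ω‖} * exp (l * ε)
      ≤ μ.real {ω | cosh (l * ε) ≤ cosh ‖∑ i ∈ Finset.Icc 1 t, (l • Y i) ω‖} *
          (2 * cosh (l * ε)) := by
        gcongr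
        · exact measure_ne_top _ _
        · exact exp_le_two_mul_cosh _
    _ ≤ 2 * exp (l ^ 2 / 2 * ∑ i ∈ Finset.Icc 1 t, c i ^ 2) := by linarith

lemma measureReal_le_norm_sum_le (hY : IsBoundedMartingaleDifference μ ℱ Y c) {t : ℕ} {V ε : ℝ}
    (hV : 0 < V) (hcV : ∑ i ∈ Finset.Icc 1 t, c i ^ 2 ≤ V) (hε : 0 ≤ ε) :
    μ.real {ω | ε ≤ ‖∑ i ∈ Finset.Icc 1 t, Y i ω‖} ≤ 2 * exp (-(ε ^ 2 / (2 * V))) := by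
  calc μ.real {ω | ε ≤ ‖∑ i ∈ Finset.Icc 1 t, Y i ω‖}
      ≤ 2 * exp ((ε / V) ^ 2 / 2 * ∑ i ∈ Finset.Icc 1 t, c i ^ 2 - ε / V * ε) :=
        hY.measureReal_le_norm_sum_le_exp t (by positivity) hε
    _ ≤ 2 * exp ((ε / V) ^ 2 / 2 * V - ε / V * ε) := by gcongr
    _ = 2 * exp (-(ε ^ 2 / (2 * V))) := by
        congr 2
        field_simp
        ring

lemma measureReal_exists_le_norm_sum_clm_le (hX : IsBoundedMartingaleDifference μ ℱ X c)
    (φ : ℕ → ℕ → E →L[ℝ] F) {N : ℕ} {V ε : ℝ} (hV : 0 < V)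
    (hφV : ∀ t ∈ Finset.Icc 1 N, ∑ i ∈ Finset.Icc 1 t, (‖φ t i‖ * c i) ^ 2 ≤ V) (hε : 0 ≤ ε) :
    μ.real {ω | ∃ t ∈ Finset.Icc 1 N, ε ≤ ‖∑ i ∈ Finset.Icc 1 t, φ t i (X i ω)‖} ≤
      N * (2 * exp (-(ε ^ 2 / (2 * V)))) := by
  have hunion : {ω | ∃ t ∈ Finset.Icc 1 N, ε ≤ ‖∑ i ∈ Finset.Icc 1 t, φ t i (X i ω)‖} =
      ⋃ t ∈ Finset.Icc 1 N, {ω | ε ≤ ‖∑ i ∈ Finset.Icc 1 t, φ t i (X i ω)‖} := by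
    ext ω; simp only [Set.mem_ofPred_eq, Set.mem_iUnion, exists_prop]
  calc _ ≤ ∑ t ∈ Finset.Icc 1 N, μ.real {ω | ε ≤ ‖∑ i ∈ Finset.Icc 1 t, φ t i (X i ω)‖} :=
        hunion ▸ measureReal_biUnion_finset_le _ _
    _ ≤ ∑ t ∈ Finset.Icc 1 N, 2 * exp (-(ε ^ 2 / (2 * V))) :=
        Finset.sum_le_sum fun t ht =>
          (hX.clm_apply (φ t)).measureReal_le_norm_sum_le hV (hφV t ht) hε
    _ = N * (2 * exp (-(ε ^ 2 / (2 * V)))) := by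
        rw [Finset.sum_const, Nat.card_Icc, Nat.add_sub_cancel, nsmul_eq_mul]

end Hilbert

end IsBoundedMartingaleDifference

section Asymptotics

lemma tendsto_mul_exp_neg_mul_rpow_atTop_nhds_zero {p b : ℝ} (hp : 0 < p) (hb : 0 < b) :
    Tendsto (fun x : ℝ => x * exp (-b * x ^ p)) atTop (nhds 0) := by
  refine ((tendsto_rpow_mul_exp_neg_mul_atTop_nhds_zero (1 / p) b hb).comp
    (tendsto_rpow_atTop hp)).congr' ?_
  filter_upwards [eventually_ge_atTop 0] with x hx
  rw [Function.comp_apply, ← rpow_mul hx, mul_one_div_cancel hp.ne', rpow_one]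

lemma rpow_le_rpow_max_zero {t x r : ℝ} (ht : 1 ≤ t) (htx : t ≤ x) : t ^ r ≤ x ^ max r 0 :=
  calc t ^ r ≤ t ^ max r 0 := rpow_le_rpow_of_exponent_le ht (le_max_left r 0)
    _ ≤ x ^ max r 0 := by gcongr

lemma sum_sq_le_mul_sum {ι : Type*} (s : Finset ι) {a : ι → ℝ} {K : ℝ}
    (ha : ∀ i ∈ s, 0 ≤ a i) (haK : ∀ i ∈ s, a i ≤ K) : ∑ i ∈ s, a i ^ 2 ≤ K * ∑ i ∈ s, a i := by
  rw [Finset.mul_sum]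
  refine Finset.sum_le_sum fun i hi => ?_
  rw [sq]
  exact mul_le_mul_of_nonneg_right (haK i hi) (ha i hi)

lemma le_norm_rpow_neg_half_smul_iff {F : Type*} [NormedAddCommGroup F] [NormedSpace ℝ F]
    {x : ℝ} (hx : 0 < x) (δ : ℝ) (v : F) :
    δ ≤ ‖x ^ (-(1 / 2) : ℝ) • v‖ ↔ δ * √x ≤ ‖v‖ := by
  rw [rpow_neg hx.le, ← sqrt_eq_rpow, norm_smul, norm_inv, norm_of_nonneg (sqrt_nonneg x),
    inv_mul_eq_div, le_div_iff₀ (sqrt_pos.2 hx)]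

end Asymptotics

section WeightedSums

variable {Ω E F : Type*} {m0 : MeasurableSpace Ω} {μ : Measure Ω} [IsProbabilityMeasure μ]
  {ℱ : Filtration ℕ m0} [NormedAddCommGroup E] [NormedSpace ℝ E] [CompleteSpace E]
  [NormedAddCommGroup F] [InnerProductSpace ℝ F] [CompleteSpace F]
  {ξ : ℕ → Ω → E} {M : ℝ} {r C : ℝ} {φ : ℕ → ℕ → E →L[ℝ] F}

lemma measureReal_exists_le_norm_rescaled_sum_le
    (hξ : IsBoundedMartingaleDifference μ ℱ ξ fun _ => M) (hM : 0 < M) (hC : 0 < C)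
    (hφ : ∀ t : ℕ, 1 ≤ t → ∑ s ∈ Finset.Icc 1 t, ‖φ t s‖ ^ 2 ≤ C * (t : ℝ) ^ r)
    {T δ : ℝ} (hT : 0 < T) (hδ : 0 ≤ δ) {n : ℕ} (hn : 0 < n) :
    μ.real {ω | ∃ t ∈ Finset.Icc 1 ⌊(n : ℝ) * T⌋₊,
        δ ≤ ‖((n : ℝ) ^ (-(1 / 2) : ℝ)) • ∑ i ∈ Finset.Icc 1 t, φ t i (ξ i ω)‖} ≤
      2 * T * (n * exp (-(δ ^ 2 / (2 * (M ^ 2 * C * T ^ max r 0))) * (n : ℝ) ^ (1 - max r 0))) := by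
  set ρ := max r 0
  have hn' : (0 : ℝ) < n := Nat.cast_pos.2 hn
  have hV : 0 < M ^ 2 * C * (n * T) ^ ρ := by positivity
  have hφV : ∀ t ∈ Finset.Icc 1 ⌊(n : ℝ) * T⌋₊,
      ∑ i ∈ Finset.Icc 1 t, (‖φ t i‖ * M) ^ 2 ≤ M ^ 2 * C * (n * T) ^ ρ := fun t ht => by
    obtain ⟨h1t, htN⟩ := Finset.mem_Icc.1 ht
    have htT : (t : ℝ) ≤ n * T := (Nat.le_floor_iff (by positivity)).1 htN
    calc ∑ i ∈ Finset.Icc 1 t, (‖φ t i‖ * M) ^ 2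
        = M ^ 2 * ∑ i ∈ Finset.Icc 1 t, ‖φ t i‖ ^ 2 := by
          simp only [mul_pow, ← Finset.sum_mul, mul_comm (M ^ 2)]
      _ ≤ M ^ 2 * (C * (n * T) ^ ρ) := by
          gcongr
          refine (hφ t h1t).trans ?_
          gcongr
          exact rpow_le_rpow_max_zero (Nat.one_le_cast.2 h1t) htT
      _ = M ^ 2 * C * (n * T) ^ ρ := by ring
  have hexponent : (δ * √n) ^ 2 / (2 * (M ^ 2 * C * (n * T) ^ ρ)) =
      δ ^ 2 / (2 * (M ^ 2 * C * T ^ ρ)) * (n : ℝ) ^ (1 - ρ) := by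
    rw [mul_pow, sq_sqrt hn'.le, mul_rpow hn'.le hT.le, rpow_sub hn', rpow_one]
    field_simp
  simp only [le_norm_rpow_neg_half_smul_iff hn']
  calc _ ≤ (⌊(n : ℝ) * T⌋₊ : ℝ) *
          (2 * exp (-((δ * √n) ^ 2 / (2 * (M ^ 2 * C * (n * T) ^ ρ))))) :=
        hξ.measureReal_exists_le_norm_sum_clm_le φ hV hφV (by positivity)
    _ ≤ n * T * (2 * exp (-((δ * √n) ^ 2 / (2 * (M ^ 2 * C * (n * T) ^ ρ))))) := by
        gcongr
        exact Nat.floor_le (by positivity)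
    _ = _ := by rw [hexponent, neg_mul]; ring

theorem stmt_5_general
    (hξ : IsBoundedMartingaleDifference μ ℱ ξ fun _ => M) (hM : 0 < M) (hr : r < 1) (hC : 0 < C)
    (hφ : ∀ t : ℕ, 1 ≤ t → ∑ s ∈ Finset.Icc 1 t, ‖φ t s‖ ^ 2 ≤ C * (t : ℝ) ^ r)
    {T : ℝ} (hT : 0 < T) {δ : ℝ} (hδ : 0 < δ) :
    Tendsto (fun n : ℕ =>
        μ {ω | ∃ t ∈ Finset.Icc 1 ⌊(n : ℝ) * T⌋₊,
            δ ≤ ‖((n : ℝ) ^ (-(1 / 2) : ℝ)) • ∑ i ∈ Finset.Icc 1 t, φ t i (ξ i ω)‖})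
      atTop (nhds 0) := by
  set b := δ ^ 2 / (2 * (M ^ 2 * C * T ^ max r 0))
  have hb : 0 < b := by positivity
  have hlim : Tendsto (fun n : ℕ => 2 * T * (n * exp (-b * (n : ℝ) ^ (1 - max r 0))))
      atTop (nhds 0) := by
    simpa using ((tendsto_mul_exp_neg_mul_rpow_atTop_nhds_zero
      (sub_pos.2 (max_lt hr one_pos)) hb).comp tendsto_natCast_atTop_atTop).const_mul (2 * T)
  rw [← ENNReal.tendsto_toReal_iff (fun _ => measure_ne_top _ _) ENNReal.zero_ne_top]
  refine squeeze_zero' (Eventually.of_forall fun _ => ENNReal.toReal_nonneg) ?_ hlim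
  filter_upwards [eventually_gt_atTop 0] with n hn
  exact measureReal_exists_le_norm_rescaled_sum_le hξ hM hC hφ hT hδ.le hn

end WeightedSums

/-- maximal inequality consequence for weighted sums of a bounded
martingale-difference sequence: for deterministic matrices `φ^t_s` with `‖φ^t_s‖ ≤ K` and
`∑_{s=1}^t ‖φ^t_s‖ ≤ C′ t^r`,
`P( max_{1 ≤ t ≤ ⌊nT⌋} ‖ n^{−1/2} ∑_{i=1}^t φ^t_i ξ_i ‖ ≥ δ ) → 0` as `n → ∞`. -/
theorem stmt_5 (d : ℕ) {Ω : Type*} {m0 : MeasurableSpace Ω} (μ : Measure Ω)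
    [IsProbabilityMeasure μ] (ℱ : Filtration ℕ m0)
    (ξ : ℕ → Ω → EuclideanSpace ℝ (Fin d))
    (hadapt : ∀ t : ℕ, 1 ≤ t → StronglyMeasurable[ℱ t] (ξ t))
    (hmd : ∀ t : ℕ, 1 ≤ t → μ[ξ t | ℱ (t - 1)] =ᵐ[μ] 0)
    (M : ℝ) (hMpos : 0 < M) (hbdd : ∀ t : ℕ, 1 ≤ t → ∀ᵐ ω ∂μ, ‖ξ t ω‖ ≤ M)
    (r : ℝ) (hr : 1/2 < r) (hr1 : r < 1)
    (φ : ℕ → ℕ → Matrix (Fin d) (Fin d) ℝ)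
    (K C' : ℝ) (hK : 0 < K) (hC' : 0 < C')
    (hφK : ∀ t s : ℕ, ‖φ t s‖ ≤ K)
    (hφsum : ∀ t : ℕ, 1 ≤ t → ∑ s ∈ Finset.Icc 1 t, ‖φ t s‖ ≤ C' * (t : ℝ) ^ r) :
    ∀ T : ℝ, 0 < T → ∀ δ : ℝ, 0 < δ →
      Tendsto (fun n : ℕ =>
          μ {ω | ∃ t ∈ Finset.Icc 1 ⌊(n : ℝ) * T⌋₊,
              δ ≤ ‖((n : ℝ) ^ (-(1/2) : ℝ)) •
                ∑ i ∈ Finset.Icc 1 t, mvE (φ t i) (ξ i ω)‖})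
        atTop (nhds 0) := by
  intro T hT δ hδ
  have hξ : IsBoundedMartingaleDifference μ ℱ ξ fun _ => M :=
    ⟨fun t => hadapt _ t.succ_pos, fun t => hmd _ t.succ_pos, fun t => hbdd _ t.succ_pos⟩
  have hφsq (t : ℕ) (ht : 1 ≤ t) :
      ∑ s ∈ Finset.Icc 1 t, ‖toEuclideanCLM (𝕜 := ℝ) (φ t s)‖ ^ 2 ≤ K * C' * (t : ℝ) ^ r :=
    calc ∑ s ∈ Finset.Icc 1 t, ‖φ t s‖ ^ 2
        ≤ K * ∑ s ∈ Finset.Icc 1 t, ‖φ t s‖ :=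
          sum_sq_le_mul_sum _ (fun _ _ => norm_nonneg _) fun s _ => hφK t s
      _ ≤ K * (C' * (t : ℝ) ^ r) := by gcongr; exact hφsum t ht
      _ = K * C' * (t : ℝ) ^ r := (mul_assoc _ _ _).symm
  exact stmt_5_general hξ hMpos hr1 (mul_pos hK hC') hφsq hT hδ
end

section
/- Let w_1, …, w_m > 0 with ∑_{i=1}^m w_i = 1, let u_1, …, u_m ∈ ℝ^d be arbitrary vectors, and set s = ∑_{j=1}^m u_j. Let N be the d×m matrix whose i-th column is u_i/√(w_i), and for i = 1, …, m let r_i ∈ ℝ^m be the vector with i-th entry 1/√(w_i) − √(w_i) and j-th entry −√(w_j) for j ≠ i. Then ∑_{i=1}^m (u_i/w_i − s)(u_i/w_i − s)^T = N (∑_{i=1}^m r_i r_i^T) N^T, and the m×m matrix V := ∑_{i=1}^m r_i r_i^T has entries V_{ii} = 1/w_i − 2 + m·w_i and V_{ij} = −√(w_i/w_j) − √(w_j/w_i) + m√(w_i w_j) for i ≠ j. -/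
open Finset Matrix Real

/-!
With `q = √w`, the vector `rᵢ` is `qᵢ⁻¹ eᵢ - q`. Since `N eᵢ = uᵢ / qᵢ` and `N q = ∑ⱼ uⱼ`, the
matrix `N` maps `rᵢ` to `uᵢ / wᵢ - s`, which gives the quadratic form identity. Expanding
`rᵢ rᵢᵀ` bilinearly and summing over `i` gives `V = diag (q⁻²) - q⁻¹ qᵀ - q (q⁻¹)ᵀ + m q qᵀ`.
-/

section OuterProduct

variable {ι κ τ R : Type*}

theorem sum_vecMulVec_mulVec [Fintype ι] [NonUnitalCommSemiring R] (s : Finset τ)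
    (N : Matrix κ ι R) (r : τ → ι → R) :
    ∑ t ∈ s, vecMulVec (N *ᵥ r t) (N *ᵥ r t) = N * (∑ t ∈ s, vecMulVec (r t) (r t)) * Nᵀ := by
  simp only [Matrix.mul_sum, Matrix.sum_mul, mul_vecMulVec, vecMulVec_mul, vecMul_transpose]

theorem vecMulVec_single_single [DecidableEq ι] [DecidableEq κ] [MulZeroClass R]
    (i : ι) (j : κ) (x y : R) :
    vecMulVec (Pi.single i x) (Pi.single j y) = single i j (x * y) := by
  ext k l
  simp only [vecMulVec_apply, Pi.single_apply, single_apply, ite_zero_mul_ite_zero, eq_comm]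

theorem sum_vecMulVec_single_sub [Fintype ι] [DecidableEq ι] [Ring R] (a b : ι → R) :
    ∑ i, vecMulVec (Pi.single i (a i) - b) (Pi.single i (a i) - b) =
      diagonal (a * a) - vecMulVec a b - vecMulVec b a +
        (Fintype.card ι : R) • vecMulVec b b := by
  have sum_diag : ∑ i, vecMulVec (Pi.single i (a i)) (Pi.single i (a i)) = diagonal (a * a) := by
    simp only [vecMulVec_single_single, sum_single_eq_diagonal, Pi.mul_def]
  have sum_left : ∑ i, vecMulVec (Pi.single i (a i)) b = vecMulVec a b := by
    simpa only [vecMulVecBilin_apply_apply, univ_sum_single] using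
      ((vecMulVecBilin R Rᵐᵒᵖ).map_sum₂ univ (fun i => Pi.single i (a i)) b).symm
  have sum_right : ∑ i, vecMulVec b (Pi.single i (a i)) = vecMulVec b a := by
    simpa only [vecMulVecBilin_apply_apply, univ_sum_single] using
      (map_sum (vecMulVecBilin R Rᵐᵒᵖ b) (fun i => Pi.single i (a i)) univ).symm
  simp only [sub_vecMulVec, vecMulVec_sub, sum_sub_distrib, sum_diag, sum_left, sum_right,
    sum_const, card_univ, Nat.cast_smul_eq_nsmul]
  abel

end OuterProduct

section Field

variable {ι κ K : Type*} [Fintype ι] [DecidableEq ι] [Field K] {q : ι → K}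

theorem of_div_mulVec_single_inv_sub (hq : ∀ i, q i ≠ 0) (u : ι → κ → K) (i : ι) :
    (of fun k j => u j k / q j) *ᵥ (Pi.single i (q i)⁻¹ - q) =
      (q i ^ 2)⁻¹ • u i - ∑ j, u j := by
  have mulVec_single_inv :
      (of fun k j => u j k / q j) *ᵥ Pi.single i (q i)⁻¹ = (q i ^ 2)⁻¹ • u i := by
    ext k
    simp only [mulVec_single, Pi.smul_apply, col_apply, of_apply, op_smul_eq_mul, smul_eq_mul]
    ring
  have mulVec_q : (of fun k j => u j k / q j) *ᵥ q = ∑ j, u j := by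
    ext k
    simp [mulVec, dotProduct, div_mul_cancel₀ _ (hq _)]
  rw [mulVec_sub, mulVec_single_inv, mulVec_q]

theorem sum_vecMulVec_single_inv_sub_apply_self {i : ι} (hqi : q i ≠ 0) :
    (∑ k, vecMulVec (Pi.single k (q k)⁻¹ - q) (Pi.single k (q k)⁻¹ - q)) i i =
      1 / q i ^ 2 - 2 + Fintype.card ι * q i ^ 2 := by
  have expand := congr_fun₂ (sum_vecMulVec_single_sub q⁻¹ q) i i
  simp only [Pi.inv_apply, Matrix.add_apply, Matrix.sub_apply, Matrix.smul_apply,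
    vecMulVec_apply, Pi.mul_apply, diagonal_apply_eq, smul_eq_mul, inv_mul_cancel₀ hqi,
    mul_inv_cancel₀ hqi] at expand
  rw [expand]
  ring

theorem sum_vecMulVec_single_inv_sub_apply_ne (q : ι → K) {i j : ι} (hij : i ≠ j) :
    (∑ k, vecMulVec (Pi.single k (q k)⁻¹ - q) (Pi.single k (q k)⁻¹ - q)) i j =
      -(q i / q j) - q j / q i + Fintype.card ι * (q i * q j) := by
  have expand := congr_fun₂ (sum_vecMulVec_single_sub q⁻¹ q) i j
  simp only [Pi.inv_apply, Matrix.add_apply, Matrix.sub_apply, Matrix.smul_apply, vecMulVec_apply,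
    diagonal_apply_ne _ hij, smul_eq_mul] at expand
  rw [expand]
  ring

end Field

theorem stmt_8_general {ι κ : Type*} [Fintype ι] [DecidableEq ι] (w : ι → ℝ) (hw : ∀ i, 0 < w i)
    (u : ι → κ → ℝ) (s : κ → ℝ) (hs : s = ∑ j, u j)
    (N : Matrix κ ι ℝ) (hN : ∀ a i, N a i = u i a / √(w i))
    (r : ι → ι → ℝ)
    (hr : ∀ i j, r i j = if j = i then 1 / √(w i) - √(w i) else -√(w j))
    (V : Matrix ι ι ℝ) (hV : V = ∑ i, vecMulVec (r i) (r i)) :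
    (∑ i, vecMulVec ((w i)⁻¹ • u i - s) ((w i)⁻¹ • u i - s) = N * V * Nᵀ) ∧
    (∀ i, V i i = 1 / w i - 2 + Fintype.card ι * w i) ∧
    (∀ i j, i ≠ j →
      V i j = -√(w i / w j) - √(w j / w i) + Fintype.card ι * √(w i * w j)) := by
  let q : ι → ℝ := fun i => √(w i)
  have q_ne_zero (i : ι) : q i ≠ 0 := (sqrt_pos.2 (hw i)).ne'
  have q_sq (i : ι) : q i ^ 2 = w i := sq_sqrt (hw i).le
  have r_eq (i : ι) : r i = Pi.single i (q i)⁻¹ - q := by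
    ext j
    rcases eq_or_ne j i with rfl | hji
    · simp [hr, q]
    · simp [hr, hji, q]
  have N_eq : N = of fun k j => u j k / q j := Matrix.ext hN
  have N_mulVec_r (i : ι) : N *ᵥ r i = (w i)⁻¹ • u i - s := by
    rw [N_eq, r_eq, of_div_mulVec_single_inv_sub q_ne_zero, q_sq, hs]
  refine ⟨?_, fun i => ?_, fun i j hij => ?_⟩
  · simp only [← N_mulVec_r, hV, sum_vecMulVec_mulVec]
  · simp only [hV, r_eq, sum_vecMulVec_single_inv_sub_apply_self (q_ne_zero i), q_sq]
  · simp only [hV, r_eq, sum_vecMulVec_single_inv_sub_apply_ne q hij, q,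
      sqrt_div (hw _).le, sqrt_mul (hw _).le]

/-- the batch means quadratic form identity
`∑ᵢ (uᵢ/wᵢ − s)(uᵢ/wᵢ − s)ᵀ = N V Nᵀ` with `V = ∑ᵢ rᵢ rᵢᵀ`, together with the explicit
entries of `V`. -/
theorem stmt_8 (d m : ℕ) (w : Fin m → ℝ) (hw : ∀ i, 0 < w i) (hw1 : ∑ i, w i = 1)
    (u : Fin m → (Fin d → ℝ)) (s : Fin d → ℝ) (hs : s = ∑ j, u j)
    (N : Matrix (Fin d) (Fin m) ℝ) (hN : ∀ a i, N a i = u i a / Real.sqrt (w i))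
    (r : Fin m → (Fin m → ℝ))
    (hr : ∀ i j, r i j = if j = i then 1 / Real.sqrt (w i) - Real.sqrt (w i)
      else -Real.sqrt (w j))
    (V : Matrix (Fin m) (Fin m) ℝ) (hV : V = ∑ i, Matrix.vecMulVec (r i) (r i)) :
    (∑ i, Matrix.vecMulVec ((w i)⁻¹ • u i - s) ((w i)⁻¹ • u i - s) = N * V * Nᵀ) ∧
    (∀ i, V i i = 1 / w i - 2 + m * w i) ∧
    (∀ i j, i ≠ j →
      V i j = -Real.sqrt (w i / w j) - Real.sqrt (w j / w i) + m * Real.sqrt (w i * w j)) := by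
  simpa only [Fintype.card_fin] using stmt_8_general w hw u s hs N hN r hr V hV
end

section
/- Let w_1, …, w_m > 0 with ∑_{i=1}^m w_i = 1, and let V be the m×m symmetric matrix with V_{ii} = 1/w_i − 2 + m·w_i and V_{ij} = −√(w_i/w_j) − √(w_j/w_i) + m√(w_i w_j) for i ≠ j. Then V is positive semidefinite and has rank exactly m − 1; in particular, the upper-left (m−1)×(m−1) submatrix of V is positive definite. -/
open Finset Matrix Real

/-!
Put `s i = √(w i)`, a unit vector with positive entries. Then `V = Bᵀ B` with
`B = diag(1 / s) - 1 sᵀ`, so `V` is positive semidefinite. Since `(B x) k = x k / s k - ⟨s, x⟩`, the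
kernel of `B` is the line spanned by `s`, whence the rank. A vector of this line vanishing at one
coordinate vanishes altogether, so any proper subfamily of the columns of `B` is linearly
independent, and its Gram matrix is positive definite.
-/

section KernelLine

variable {ι κ μ : Type*} [Fintype ι] [Fintype κ]

theorem submatrix_id_mulVec_eq_mulVec_extend {R : Type*} [NonUnitalNonAssocSemiring R]
    (A : Matrix μ ι R) {e : κ → ι} (he : Function.Injective e) (x : κ → R) :
    A.submatrix id e *ᵥ x = A *ᵥ Function.extend e x 0 := by
  ext k
  refine Fintype.sum_of_injective e he _ _ (fun i hi => ?_) fun j => ?_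
  · rw [Function.extend_apply' _ _ _ hi, Pi.zero_apply, mul_zero]
  · simp only [he.extend_apply, submatrix_apply, id]

theorem submatrix_id_mulVec_injective_of_ker_le_span {R : Type*} [CommRing R] [NoZeroDivisors R]
    {A : Matrix μ ι R} {v : ι → R} (hker : LinearMap.ker A.mulVecLin ≤ R ∙ v)
    {e : κ → ι} (he : Function.Injective e) {k : ι} (hk : k ∉ Set.range e) (hvk : v k ≠ 0) :
    Function.Injective (A.submatrix id e).mulVec := by
  rw [← coe_mulVecLin, ← LinearMap.ker_eq_bot, LinearMap.ker_eq_bot']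
  intro x hx
  rw [mulVecLin_apply, submatrix_id_mulVec_eq_mulVec_extend A he] at hx
  obtain ⟨c, hc⟩ := Submodule.mem_span_singleton.1 (hker hx)
  have hc_zero : c = 0 := by
    have hcv : c * v k = 0 := by
      simpa [Function.extend_apply' _ _ _ hk] using congrFun hc k
    exact (mul_eq_zero.1 hcv).resolve_right hvk
  ext j
  rw [← he.extend_apply x 0 j, ← hc, hc_zero, zero_smul, Pi.zero_apply, Pi.zero_apply]

theorem rank_add_one_eq_card_of_ker_eq_span {K : Type*} [Field K] {A : Matrix μ ι K} {v : ι → K}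
    (hker : LinearMap.ker A.mulVecLin = K ∙ v) (hv : v ≠ 0) :
    A.rank + 1 = Fintype.card ι := by
  rw [← Module.finrank_fintype_fun_eq_card K, ← A.mulVecLin.finrank_range_add_finrank_ker, hker,
    finrank_span_singleton hv, Matrix.rank]

end KernelLine

section BatchMeansFactor

variable {ι K : Type*} [Fintype ι] [DecidableEq ι] [Field K]

/-- The matrix `diag(1 / s) - 1 sᵀ`. For `s = √w` its Gram matrix is the batch-means matrix `V` with
weights `w`. -/
def batchMeansFactor (s : ι → K) : Matrix ι ι K :=
  diagonal s⁻¹ - replicateRow ι s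

theorem batchMeansFactor_mulVec (s x : ι → K) (k : ι) :
    (batchMeansFactor s *ᵥ x) k = x k / s k - s ⬝ᵥ x := by
  simp [batchMeansFactor, sub_mulVec, mulVec_diagonal, replicateRow_mulVec_eq_const, div_eq_inv_mul]

theorem ker_batchMeansFactor {s : ι → K} (hs : ∀ i, s i ≠ 0) (hs_unit : s ⬝ᵥ s = 1) :
    LinearMap.ker (batchMeansFactor s).mulVecLin = K ∙ s := by
  ext x
  rw [LinearMap.mem_ker, mulVecLin_apply, Submodule.mem_span_singleton]
  constructor
  · intro hx
    refine ⟨s ⬝ᵥ x, funext fun k => ?_⟩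
    have hk := congrFun hx k
    rw [batchMeansFactor_mulVec, Pi.zero_apply, sub_eq_zero, div_eq_iff (hs k)] at hk
    exact hk.symm
  · rintro ⟨c, rfl⟩
    ext k
    simp [batchMeansFactor_mulVec, hs_unit, hs k]

theorem batchMeansFactor_transpose_mul_self (s : ι → K) :
    (batchMeansFactor s)ᵀ * batchMeansFactor s =
      diagonal (s⁻¹ * s⁻¹) - vecMulVec s⁻¹ s - vecMulVec s s⁻¹
        + (Fintype.card ι : K) • vecMulVec s s := by
  have hdiag_row : diagonal s⁻¹ * replicateRow ι s = vecMulVec s⁻¹ s := by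
    ext i j
    simp [vecMulVec_apply]
  have hcol_diag : replicateCol ι s * diagonal s⁻¹ = vecMulVec s s⁻¹ := by
    ext i j
    simp [vecMulVec_apply]
  have hcol_row : replicateCol ι s * replicateRow ι s = (Fintype.card ι : K) • vecMulVec s s := by
    ext i j
    simp [mul_apply, vecMulVec_apply]
  rw [batchMeansFactor, transpose_sub, diagonal_transpose, transpose_replicateRow, sub_mul, mul_sub,
    mul_sub, diagonal_mul_diagonal', hdiag_row, hcol_diag, hcol_row, Pi.mul_def]
  abel

theorem batchMeansFactor_sqrt_transpose_mul_self_apply {w : ι → ℝ} (hw : ∀ i, 0 < w i) (i j : ι) :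
    ((batchMeansFactor fun i => √(w i))ᵀ * batchMeansFactor fun i => √(w i)) i j =
      if i = j then 1 / w i - 2 + Fintype.card ι * w i
      else -√(w i / w j) - √(w j / w i) + Fintype.card ι * √(w i * w j) := by
  rw [batchMeansFactor_transpose_mul_self]
  rcases eq_or_ne i j with rfl | hij
  · have hsqrt : √(w i) ≠ 0 := (Real.sqrt_pos.2 (hw i)).ne'
    have hsq : √(w i) * √(w i) = w i := Real.mul_self_sqrt (hw i).le
    have hinv : (√(w i))⁻¹ * (√(w i))⁻¹ = (w i)⁻¹ := by rw [← mul_inv, hsq]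
    simp only [Matrix.add_apply, Matrix.sub_apply, Matrix.smul_apply, diagonal_apply_eq,
      vecMulVec_apply, Pi.mul_apply, Pi.inv_apply, smul_eq_mul, hinv, hsq,
      inv_mul_cancel₀ hsqrt, mul_inv_cancel₀ hsqrt, ↓reduceIte]
    ring
  · simp only [Matrix.add_apply, Matrix.sub_apply, Matrix.smul_apply, diagonal_apply_ne _ hij,
      vecMulVec_apply, Pi.inv_apply, smul_eq_mul, Real.sqrt_div (hw _).le, Real.sqrt_mul (hw _).le,
      hij, ↓reduceIte]
    ring

end BatchMeansFactor

theorem stmt_10_general {ι κ : Type*} [Fintype ι] [DecidableEq ι] {w : ι → ℝ}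
    (hw : ∀ i, 0 < w i) (hw1 : ∑ i, w i = 1) {V : Matrix ι ι ℝ}
    (hV : ∀ i j, V i j = if i = j then 1 / w i - 2 + Fintype.card ι * w i
      else -√(w i / w j) - √(w j / w i) + Fintype.card ι * √(w i * w j)) :
    V.PosSemidef ∧ V.rank = Fintype.card ι - 1 ∧
      ∀ e : κ → ι, Function.Injective e → ¬ Function.Surjective e → (V.submatrix e e).PosDef := by
  set s : ι → ℝ := fun i => √(w i)
  have hs : ∀ i, s i ≠ 0 := fun i => (Real.sqrt_pos.2 (hw i)).ne'
  have hs_unit : s ⬝ᵥ s = 1 := by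
    simpa only [dotProduct, s, Real.mul_self_sqrt (hw _).le] using hw1
  have hs_ne_zero : s ≠ 0 := by
    intro h
    simp [h] at hs_unit
  have hker := ker_batchMeansFactor hs hs_unit
  obtain rfl : V = (batchMeansFactor s)ᴴ * batchMeansFactor s := by
    ext i j
    rw [hV, conjTranspose_eq_transpose_of_trivial,
      batchMeansFactor_sqrt_transpose_mul_self_apply hw]
  refine ⟨posSemidef_conjTranspose_mul_self _, ?_, fun e he he_surj => ?_⟩
  · rw [rank_conjTranspose_mul_self, ← rank_add_one_eq_card_of_ker_eq_span hker hs_ne_zero,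
      Nat.add_sub_cancel]
  · have := Fintype.ofInjective e he
    obtain ⟨k, hk⟩ := not_forall.1 he_surj
    have hinj := submatrix_id_mulVec_injective_of_ker_le_span hker.le he hk (hs k)
    exact PosDef.conjTranspose_mul_self _ hinj

theorem not_surjective_castLE {n m : ℕ} (h : n < m) :
    ¬ Function.Surjective (Fin.castLE h.le) := fun hsurj =>
  h.not_ge (by simpa using Fintype.card_le_of_surjective _ hsurj)

/-- the batch-means matrix `V` is positive semidefinite of rank exactly
`m − 1`, and its upper-left `(m−1)×(m−1)` submatrix is positive definite. -/
theorem stmt_10 (m : ℕ) (w : Fin m → ℝ) (hw : ∀ i, 0 < w i) (hw1 : ∑ i, w i = 1)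
    (V : Matrix (Fin m) (Fin m) ℝ)
    (hV : ∀ i j, V i j = if i = j then 1 / w i - 2 + m * w i
      else -Real.sqrt (w i / w j) - Real.sqrt (w j / w i) + m * Real.sqrt (w i * w j)) :
    V.PosSemidef ∧ V.rank = m - 1 ∧
      (V.submatrix (Fin.castLE (Nat.sub_le m 1)) (Fin.castLE (Nat.sub_le m 1))).PosDef := by
  have hm : m ≠ 0 := by
    rintro rfl
    simp at hw1
  obtain ⟨hpsd, hrank, hsub⟩ := stmt_10_general hw hw1 (V := V) (by simpa using hV)
  exact ⟨hpsd, by simpa using hrank,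
    hsub _ (Fin.castLE_injective _) (not_surjective_castLE (Nat.sub_one_lt hm))⟩
end

section
/- Let m ≥ d + 1, let V be an m×m real symmetric positive semidefinite matrix of rank m − 1, and let N be a random d×m matrix whose dm entries are independent and identically distributed standard normal (N(0,1)) random variables. Then the random d×d matrix N V N^T is positive definite almost surely. -/
open Matrix MeasureTheory ProbabilityTheory

/-!
The determinant of `B V Bᵀ` is a polynomial in the entries of `B`. It is not the zero polynomial:
taking for the rows of `B` orthonormal eigenvectors of `V` with nonzero eigenvalues makes `B V Bᵀ`
an invertible diagonal matrix. By Fubini, a nonzero polynomial vanishes only on a null set of any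
product of atomless measures, so `N V Nᵀ`, which is positive semidefinite, is almost surely
invertible.
-/

section Semiring

variable {R : Type*} [CommSemiring R] [MeasurableSpace R] [MeasurableAdd₂ R] [MeasurableMul₂ R]

theorem measurable_mvPolynomial_eval {σ : Type*} (p : MvPolynomial σ R) :
    Measurable fun x : σ → R => MvPolynomial.eval x p := by
  induction p using MvPolynomial.induction_on with
  | C a => simp
  | add p q hp hq => simpa using! hp.add hq
  | mul_X p i hp => simpa using! hp.mul (measurable_pi_apply i)

variable [MeasurableSingletonClass R]

theorem measurableSet_mvPolynomial_eval_ne_zero {σ : Type*} (p : MvPolynomial σ R) :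
    MeasurableSet {x : σ → R | MvPolynomial.eval x p ≠ 0} :=
  (measurable_mvPolynomial_eval p (measurableSet_singleton 0)).compl

theorem ae_pi_mvPolynomial_eval_ne_zero_of_equiv {σ τ : Type*} [Fintype σ] [Fintype τ]
    (e : σ ≃ τ) (ν : τ → Measure R) [∀ i, SigmaFinite (ν i)] {p : MvPolynomial τ R}
    (h : ∀ᵐ x ∂Measure.pi fun i => ν (e i),
      MvPolynomial.eval x (MvPolynomial.rename e.symm p) ≠ 0) :
    ∀ᵐ x ∂Measure.pi ν, MvPolynomial.eval x p ≠ 0 := by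
  rw [← Measure.pi_map_piCongrLeft e ν, ae_map_iff (MeasurableEquiv.measurable _).aemeasurable
    (measurableSet_mvPolynomial_eval_ne_zero p)]
  filter_upwards [h] with x hx
  have he : MeasurableEquiv.piCongrLeft (fun _ => R) e x = x ∘ e.symm := by
    ext j
    obtain ⟨i, rfl⟩ := e.surjective j
    simp [MeasurableEquiv.coe_piCongrLeft]
  rwa [he, ← MvPolynomial.eval_rename]

end Semiring

section Domain

variable {R : Type*} [CommRing R] [IsDomain R] [MeasurableSpace R]

theorem ae_polynomial_eval_ne_zero (ν : Measure R) [NullSingletonClass ν] {p : Polynomial R}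
    (hp : p ≠ 0) : ∀ᵐ t ∂ν, p.eval t ≠ 0 :=
  (Polynomial.finite_setOfPred_isRoot hp).countable.ae_notMem ν

theorem ae_mvPolynomial_eval_optionElim_ne_zero (ν : Measure R) [NullSingletonClass ν]
    {σ : Type*} {p : MvPolynomial (Option σ) R} {s : σ → R}
    (hs : MvPolynomial.eval s (MvPolynomial.optionEquivLeft R σ p).leadingCoeff ≠ 0) :
    ∀ᵐ t ∂ν, MvPolynomial.eval (fun i => Option.elim i t s) p ≠ 0 := by
  have hmap : (MvPolynomial.optionEquivLeft R σ p).map (MvPolynomial.eval s) ≠ 0 := by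
    rwa [← Polynomial.leadingCoeff_ne_zero,
      Polynomial.leadingCoeff_map_of_leadingCoeff_ne_zero _ hs]
  simpa only [MvPolynomial.optionEquivLeft_elim_eval] using ae_polynomial_eval_ne_zero ν hmap

variable [MeasurableAdd₂ R] [MeasurableMul₂ R] [MeasurableSingletonClass R]

theorem ae_pi_option_mvPolynomial_eval_ne_zero {σ : Type*} [Fintype σ]
    (ν : Option σ → Measure R) [∀ i, SigmaFinite (ν i)] [NullSingletonClass (ν none)]
    {p : MvPolynomial (Option σ) R} (hlead : ∀ᵐ s ∂Measure.pi fun i => ν (some i),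
      MvPolynomial.eval s (MvPolynomial.optionEquivLeft R σ p).leadingCoeff ≠ 0) :
    ∀ᵐ x ∂Measure.pi ν, MvPolynomial.eval x p ≠ 0 := by
  let e := (MeasurableEquiv.piOptionEquivProd fun _ : Option σ => R).symm
  have hmeas := measurableSet_mvPolynomial_eval_ne_zero p
  rw [← Measure.pi_map_piOptionEquivProd ν, ae_map_iff e.measurable.aemeasurable hmeas]
  refine (Measure.ae_prod_iff_ae_ae (e.measurable hmeas)).mpr ?_
  filter_upwards [hlead] with s hs
  have he (t : R) : e (s, t) = fun i => Option.elim i t s := by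
    ext i
    cases i <;> rfl
  simpa only [← he] using ae_mvPolynomial_eval_optionElim_ne_zero (ν none) hs

theorem ae_pi_mvPolynomial_eval_ne_zero {σ : Type*} [Fintype σ] (ν : σ → Measure R)
    [∀ i, SigmaFinite (ν i)] [∀ i, NullSingletonClass (ν i)] {p : MvPolynomial σ R} (hp : p ≠ 0) :
    ∀ᵐ x ∂Measure.pi ν, MvPolynomial.eval x p ≠ 0 := by
  refine Fintype.induction_empty_option
    (P := fun σ _ => ∀ (ν : σ → Measure R) [∀ i, SigmaFinite (ν i)]
      [∀ i, NullSingletonClass (ν i)] {p : MvPolynomial σ R}, p ≠ 0 →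
        ∀ᵐ x ∂Measure.pi ν, MvPolynomial.eval x p ≠ 0)
    (fun α β _ e ih ν _ _ p hp => ?of_equiv) (fun ν _ _ p hp => ?empty)
    (fun α _ ih ν _ _ p hp => ?option) σ ν hp
  case of_equiv =>
    let := Fintype.ofEquiv β e.symm
    have hrename : MvPolynomial.rename e.symm p ≠ 0 := by
      simpa using (MvPolynomial.rename_injective _ e.symm.injective).ne hp
    exact ae_pi_mvPolynomial_eval_ne_zero_of_equiv e ν (ih _ hrename)
  case empty =>
    obtain ⟨c, rfl⟩ := MvPolynomial.C_surjective PEmpty p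
    exact .of_forall fun x => by simpa using hp
  case option =>
    have hlead : (MvPolynomial.optionEquivLeft R α p).leadingCoeff ≠ 0 := by simpa using hp
    exact ae_pi_option_mvPolynomial_eval_ne_zero ν (ih _ hlead)

theorem ae_mvPolynomial_eval_ne_zero_of_iIndepFun {σ Ω : Type*} [Finite σ] [MeasurableSpace Ω]
    {μ : Measure Ω} {X : σ → Ω → R} (hX : ∀ i, AEMeasurable (X i) μ) (hindep : iIndepFun X μ)
    [∀ i, NullSingletonClass (μ.map (X i))] {p : MvPolynomial σ R} (hp : p ≠ 0) :
    ∀ᵐ ω ∂μ, MvPolynomial.eval (fun i => X i ω) p ≠ 0 := by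
  have := Fintype.ofFinite σ
  have := hindep.isProbabilityMeasure
  have := fun i => Measure.isProbabilityMeasure_map (hX i)
  have hlaw := ae_pi_mvPolynomial_eval_ne_zero (fun i => μ.map (X i)) hp
  rw [← hindep.map_fun_eq_pi_map hX] at hlaw
  exact ae_of_ae_map (aemeasurable_pi_lambda _ hX) hlaw

end Domain

section Matrix

variable {ι κ : Type*} [Fintype ι] [Fintype κ]

theorem exists_det_mul_mul_conjTranspose_ne_zero {𝕜 : Type*} [RCLike 𝕜] [DecidableEq ι]
    {V : Matrix κ κ 𝕜} (hV : V.IsHermitian) (hrank : Fintype.card ι ≤ V.rank) :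
    ∃ B : Matrix ι κ 𝕜, (B * V * Bᴴ).det ≠ 0 := by
  classical
  rw [hV.rank_eq_card_non_zero_eigs] at hrank
  obtain ⟨f⟩ := Function.Embedding.nonempty_of_card_le hrank
  let g : ι → κ := fun i => f i
  have hg : Function.Injective g := Subtype.val_injective.comp f.injective
  let U : Matrix κ κ 𝕜 := hV.eigenvectorUnitary
  have hdiag : Uᴴ * V * U = diagonal (RCLike.ofReal ∘ hV.eigenvalues) := by
    simpa only [Unitary.conjStarAlgAut_star_apply] using!
      hV.conjStarAlgAut_star_eigenvectorUnitary
  have hsub : Uᴴ.submatrix g id * V * (Uᴴ.submatrix g id)ᴴ =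
      diagonal fun i => (hV.eigenvalues (g i) : 𝕜) := by
    calc
      _ = (Uᴴ * V * U).submatrix g g := by
        ext
        simp [Matrix.mul_apply]
      _ = _ := by rw [hdiag, submatrix_diagonal _ _ hg]; rfl
  refine ⟨Uᴴ.submatrix g id, ?_⟩
  rw [hsub, det_diagonal]
  exact Finset.prod_ne_zero_iff.mpr fun i _ => RCLike.ofReal_ne_zero.mpr (f i).2

variable {R : Type*} [CommRing R] [DecidableEq ι]

variable (ι) in
/-- The determinant of `B V Bᵀ` as a polynomial in the entries of the `ι × κ` matrix `B`, the
variable `(i, k)` standing for `B i k`; its zeros are the `B` for which `B V Bᵀ` is degenerate. -/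
noncomputable def congruenceDet (V : Matrix κ κ R) : MvPolynomial (ι × κ) R :=
  (mvPolynomialX ι κ R * V.map (MvPolynomial.C (σ := ι × κ)) * (mvPolynomialX ι κ R)ᵀ).det

theorem eval_congruenceDet (V : Matrix κ κ R) (B : Matrix ι κ R) :
    MvPolynomial.eval (fun p => B p.1 p.2) (congruenceDet ι V) = (B * V * Bᵀ).det := by
  rw [congruenceDet, RingHom.map_det]
  congr 1
  ext i j
  simp [Matrix.mul_apply]

theorem congruenceDet_ne_zero {V : Matrix κ κ ℝ} (hV : V.IsHermitian)
    (hrank : Fintype.card ι ≤ V.rank) : congruenceDet ι V ≠ 0 := by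
  obtain ⟨B, hB⟩ := exists_det_mul_mul_conjTranspose_ne_zero hV hrank
  rw [conjTranspose_eq_transpose_of_trivial, ← eval_congruenceDet] at hB
  exact ne_zero_of_map hB

end Matrix

theorem stmt_13_general {ι κ Ω : Type*} [Fintype ι] [Fintype κ] [MeasurableSpace Ω]
    {V : Matrix κ κ ℝ} (hV : V.PosSemidef) (hrank : Fintype.card ι ≤ V.rank)
    {μ : Measure Ω} {N : Ω → Matrix ι κ ℝ}
    (hmeas : ∀ p : ι × κ, AEMeasurable (fun ω => N ω p.1 p.2) μ)
    (hindep : iIndepFun (fun (p : ι × κ) ω => N ω p.1 p.2) μ)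
    (hatomless : ∀ p : ι × κ, NullSingletonClass (μ.map fun ω => N ω p.1 p.2)) :
    ∀ᵐ ω ∂μ, (N ω * V * (N ω)ᵀ).PosDef := by
  classical
  filter_upwards [ae_mvPolynomial_eval_ne_zero_of_iIndepFun hmeas hindep
    (congruenceDet_ne_zero hV.isHermitian hrank)] with ω hdet
  have hsemidef : (N ω * V * (N ω)ᵀ).PosSemidef := by
    simpa using hV.mul_mul_conjTranspose_same (N ω)
  rwa [hsemidef.posDef_iff_det_ne_zero, ← eval_congruenceDet]

/-- if `m ≥ d + 1`, `V` is an `m × m` real symmetric positive semidefinite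
matrix of rank `m − 1`, and `N` is a random `d × m` matrix with i.i.d. standard normal
entries, then `N V Nᵀ` is positive definite almost surely. -/
theorem stmt_13 (d m : ℕ) (hd : 0 < d) (hdm : d + 1 ≤ m)
    (V : Matrix (Fin m) (Fin m) ℝ) (hV : V.PosSemidef) (hVrank : V.rank = m - 1)
    {Ω : Type*} [MeasurableSpace Ω] (μ : Measure Ω) [IsProbabilityMeasure μ]
    (N : Ω → Matrix (Fin d) (Fin m) ℝ)
    (hmeas : ∀ p : Fin d × Fin m, Measurable fun ω => N ω p.1 p.2)
    (hindep : iIndepFun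
      (fun (p : Fin d × Fin m) ω => N ω p.1 p.2) μ)
    (hgauss : ∀ p : Fin d × Fin m,
      Measure.map (fun ω => N ω p.1 p.2) μ = gaussianReal 0 1) :
    ∀ᵐ ω ∂μ, ((N ω) * V * (N ω)ᵀ).PosDef :=
  stmt_13_general hV (by rw [hVrank, Fintype.card_fin]; lia) (fun p => (hmeas p).aemeasurable)
    hindep fun p => hgauss p ▸ nullSingletonClass_gaussianReal one_ne_zero
end

section
/- Let B be a standard d-dimensional Brownian motion on [0,1], let m be a positive integer, and let 0 = c_0 < c_1 < ⋯ < c_m = 1 with w_i = c_i − c_{i−1} > 0. If m ≥ d + 1, then the random d×d matrix g_m(B, w) is positive definite with probability 1; if m ≤ d, then g_m(B, w) is singular (degenerate) with probability 1. -/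
open MeasureTheory ProbabilityTheory Matrix Finset

/-- `B` is a standard `d`-dimensional Brownian motion on `[0,1]` under `μ`:
it starts at `0`, has continuous paths, independent increments, and Gaussian increments
`B t − B s ∼ N(0, (t−s) I)` (i.e. `d` independent one-dimensional standard Brownian
coordinates). -/
def IsStdBM (d : ℕ) {Ω : Type*} [MeasurableSpace Ω] (μ : Measure Ω)
    (B : ℝ → Ω → (Fin d → ℝ)) : Prop :=
  (∀ ω, B 0 ω = 0) ∧
  (∀ ω, ContinuousOn (fun t => B t ω) (Set.Icc 0 1)) ∧
  (∀ t ∈ Set.Icc (0 : ℝ) 1, Measurable (B t)) ∧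
  (∀ (n : ℕ) (t : ℕ → ℝ), Monotone t → (∀ i, t i ∈ Set.Icc (0 : ℝ) 1) →
    iIndepFun
      (fun i : Fin n => fun ω => B (t (i + 1)) ω - B (t i) ω) μ) ∧
  (∀ s t : ℝ, 0 ≤ s → s ≤ t → t ≤ 1 →
    Measure.map (fun ω => B t ω - B s ω) μ =
      Measure.pi fun _ : Fin d => gaussianReal 0 (Real.toNNReal (t - s)))

/-- The batch-means functional `g_m(x, w)` associated to breakpoints
`0 = c_0 < c_1 < ⋯ < c_m = 1` (with `w_i = c_i − c_{i−1}`). -/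
noncomputable def gm (d m : ℕ) (x : ℝ → (Fin d → ℝ)) (c : ℕ → ℝ) :
    Matrix (Fin d) (Fin d) ℝ :=
  ((m : ℝ) - 1)⁻¹ •
    ∑ i ∈ Finset.Icc 1 m,
      Matrix.vecMulVec
        ((c i - c (i - 1))⁻¹ • (x (c i) - x (c (i - 1))) - x 1)
        ((c i - c (i - 1))⁻¹ • (x (c i) - x (c (i - 1))) - x 1)

/-!
The matrix `gm d m x c` is a multiple of `Aᵀ * A`, where the rows of `A` are the slopes of `x` over
the blocks, recentred at `x 1`.

The block widths form a linear relation between the rows, because the increments of `x` add up to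
`x 1`. Hence `A` has rank less than `m`, and `gm d m x c` is singular whenever `m ≤ d`, for every
path `x`.

A vector in the kernel of `A` has the same dot product with every slope. Hence the kernel vanishes
as soon as the slopes affinely span the space, and `d + 1` affinely independent slopes suffice for
this. For a Brownian motion the slopes are independent and their laws charge no proper affine
subspace, so each new slope almost surely avoids the affine span of the at most `d` earlier ones.
-/

section LinearAlgebra

theorem affineIndependent_finCons {k V P : Type*} [DivisionRing k] [AddCommGroup V] [Module k V]
    [AddTorsor V P] {n : ℕ} {p : P} {q : Fin n → P} (hq : AffineIndependent k q)
    (hp : p ∉ affineSpan k (Set.range q)) :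
    AffineIndependent k (Fin.cons p q : Fin (n + 1) → P) := by
  refine AffineIndependent.affineIndependent_of_notMem_span (i := 0) ?_ ?_
  · rw [← affineIndependent_equiv (finSuccAboveEquiv 0)]
    exact hq
  · have hrange : (Fin.cons p q : Fin (n + 1) → P) '' {i | i ≠ 0} = Set.range q := by
      rw [← Set.compl_singleton_eq, ← Fin.range_succ, ← Set.range_comp]
      rfl
    rwa [Fin.cons_zero, hrange]

theorem eq_zero_of_dotProduct_eq_const_of_affineSpan_eq_top {k ι κ : Type*} [Field k]
    [LinearOrder k] [IsStrictOrderedRing k] [Fintype ι] {v : κ → ι → k}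
    (hv : affineSpan k (Set.range v) = ⊤) {u : ι → k} {b : k} (hu : ∀ i, v i ⬝ᵥ u = b) :
    u = 0 := by
  have dotProduct_eq (y : ι → k) : y ⬝ᵥ u = b := by
    refine affineSpan_induction (p := fun z ↦ z ⬝ᵥ u = b) (hv ▸ AffineSubspace.mem_top k _ y) ?_ ?_
    · rintro _ ⟨i, rfl⟩
      exact hu i
    · intro a y₁ y₂ y₃ h₁ h₂ h₃
      rw [vsub_eq_sub, vadd_eq_add, add_dotProduct, smul_dotProduct, sub_dotProduct, h₁, h₂, h₃,
        sub_self, smul_zero, zero_add]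
  rw [← dotProduct_self_eq_zero, dotProduct_eq u, ← dotProduct_eq 0, zero_dotProduct]

theorem rank_lt_card_of_vecMul_eq_zero {k ι κ : Type*} [Field k] [Fintype ι] [Fintype κ]
    {A : Matrix ι κ k} {w : ι → k} (hw : w ≠ 0) (hwA : w ᵥ* A = 0) :
    A.rank < Fintype.card ι := by
  rw [A.rank_eq_finrank_span_row, ← not_le]
  intro hle
  have hinj : Function.Injective fun v ↦ v ᵥ* A :=
    vecMul_injective_iff.2 (linearIndependent_iff_card_le_finrank_span.2 hle)
  exact hw (hinj (hwA.trans (zero_vecMul A).symm))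

theorem det_mul_eq_zero_of_rank_lt {k ι κ : Type*} [Field k] [Fintype ι] [Fintype κ]
    [DecidableEq κ] (A : Matrix κ ι k) {B : Matrix ι κ k} (hB : B.rank < Fintype.card κ) :
    (A * B).det = 0 := by
  by_contra hdet
  have hrank : (A * B).rank = Fintype.card κ :=
    rank_of_isUnit _ ((isUnit_iff_isUnit_det _).2 (isUnit_iff_ne_zero.2 hdet))
  exact ((rank_mul_le_right A B).trans_lt hB).ne hrank

end LinearAlgebra

section BatchMeans

variable {d m : ℕ} {x : ℝ → Fin d → ℝ} {c : ℕ → ℝ}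

/-- The matrix whose rows are the deviations from `x 1` of the slopes of `x` over the `m` blocks
with breakpoints `c`. Rows are numbered from `0`: row `i` belongs to `[c i, c (i + 1)]`, the block
of index `i + 1` in `gm`. -/
noncomputable def centeredSlopes (m : ℕ) (x : ℝ → Fin d → ℝ) (c : ℕ → ℝ) :
    Matrix (Fin m) (Fin d) ℝ :=
  .of fun i ↦ slope x (c i) (c (i + 1)) - x 1

theorem gm_eq_smul_transpose_mul_self (m : ℕ) (x : ℝ → Fin d → ℝ) (c : ℕ → ℝ) :
    gm d m x c = ((m : ℝ) - 1)⁻¹ • ((centeredSlopes m x c)ᵀ * centeredSlopes m x c) := by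
  have sum_Icc_one (f : ℕ → Matrix (Fin d) (Fin d) ℝ) :
      ∑ i ∈ Icc 1 m, f i = ∑ i : Fin m, f (i + 1) := by
    rw [Fin.sum_univ_eq_sum_range (fun i ↦ f (i + 1)), range_eq_Ico, sum_Ico_add']
    rfl
  rw [gm, sum_Icc_one]
  congr 1
  ext j k
  simp [centeredSlopes, slope_def_module, Matrix.sum_apply, vecMulVec_apply, mul_apply]

theorem blockWidths_vecMul_centeredSlopes (hx : x 0 = 0) (hc0 : c 0 = 0) (hcm : c m = 1) :
    (fun i : Fin m ↦ c (i + 1) - c i) ᵥ* centeredSlopes m x c = 0 := by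
  calc (fun i : Fin m ↦ c (i + 1) - c i) ᵥ* centeredSlopes m x c
      = ∑ i : Fin m, ((x (c (i + 1)) - x (c i)) - (c (i + 1) - c i) • x 1) := by
        rw [vecMul_eq_sum]
        refine sum_congr rfl fun i _ ↦ ?_
        exact (smul_sub _ _ _).trans (congrArg (· - _) (sub_smul_slope x _ _))
    _ = (x (c m) - x (c 0)) - (c m - c 0) • x 1 := by
        rw [Fin.sum_univ_eq_sum_range
            (fun i ↦ (x (c (i + 1)) - x (c i)) - (c (i + 1) - c i) • x 1),
          sum_sub_distrib, ← sum_smul, sum_range_sub (fun i ↦ x (c i)), sum_range_sub]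
    _ = 0 := by simp [hx, hc0, hcm]

theorem blockWidths_ne_zero (hc0 : c 0 = 0) (hcm : c m = 1) :
    (fun i : Fin m ↦ c (i + 1) - c i) ≠ 0 := by
  intro h
  have hsum : ∑ i : Fin m, (c (i + 1) - c i) = 1 := by
    rw [Fin.sum_univ_eq_sum_range (fun i ↦ c (i + 1) - c i), sum_range_sub, hc0, hcm, sub_zero]
  rw [sum_eq_zero fun i _ ↦ congrFun h i] at hsum
  exact zero_ne_one hsum

theorem det_gm_eq_zero (hmd : m ≤ d) (hx : x 0 = 0) (hc0 : c 0 = 0) (hcm : c m = 1) :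
    (gm d m x c).det = 0 := by
  have hrank : (centeredSlopes m x c).rank < Fintype.card (Fin m) :=
    rank_lt_card_of_vecMul_eq_zero (blockWidths_ne_zero hc0 hcm)
      (blockWidths_vecMul_centeredSlopes hx hc0 hcm)
  rw [gm_eq_smul_transpose_mul_self, det_smul,
    det_mul_eq_zero_of_rank_lt _ (hrank.trans_le (by simpa using hmd)), mul_zero]

theorem mulVec_centeredSlopes_injective
    (hspan : affineSpan ℝ (Set.range fun i : Fin m ↦ slope x (c i) (c (i + 1))) = ⊤) :
    Function.Injective (centeredSlopes m x c).mulVec := by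
  refine (injective_iff_map_eq_zero (centeredSlopes m x c).mulVecLin).2 fun u hu ↦ ?_
  refine eq_zero_of_dotProduct_eq_const_of_affineSpan_eq_top hspan (b := x 1 ⬝ᵥ u) fun i ↦ ?_
  rw [← sub_eq_zero, ← sub_dotProduct]
  exact congrFun hu i

theorem posDef_gm (hm : 1 < m)
    (hspan : affineSpan ℝ (Set.range fun i : Fin m ↦ slope x (c i) (c (i + 1))) = ⊤) :
    (gm d m x c).PosDef := by
  rw [gm_eq_smul_transpose_mul_self, ← conjTranspose_eq_transpose_of_trivial]
  have hpos : (0 : ℝ) < (m - 1 : ℝ)⁻¹ := inv_pos.2 (sub_pos.2 (by exact_mod_cast hm))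
  exact (PosDef.conjTranspose_mul_self _ (mulVec_centeredSlopes_injective hspan)).smul hpos

end BatchMeans

/-- A measure charges no proper affine subspace if every affine subspace other than the whole space
is a null set; equivalently, it gives no mass to hyperplanes. This is the only property of the
Gaussian law that the nondegeneracy argument needs. -/
def ChargesNoProperAffineSubspace {E : Type*} [AddCommGroup E] [Module ℝ E] [MeasurableSpace E]
    (ν : Measure E) : Prop :=
  ∀ S : AffineSubspace ℝ E, S ≠ ⊤ → ν S = 0

section ProperAffineSubspaces

theorem exists_subsingleton_update_mem_of_ne_top {k ι : Type*} [Field k] [Finite ι]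
    [DecidableEq ι] {S : AffineSubspace k (ι → k)} (hS : S ≠ ⊤) (hne : (S : Set (ι → k)).Nonempty) :
    ∃ j, ∀ y, {t | Function.update y j t ∈ S}.Subsingleton := by
  have hdir : ∃ j, Pi.single j (1 : k) ∉ S.direction := by
    by_contra! hall
    refine hS ((AffineSubspace.direction_eq_top_iff_of_nonempty hne).1 (top_le_iff.1 ?_))
    rw [← (Pi.basisFun k ι).span_eq, Submodule.span_le]
    rintro _ ⟨j, rfl⟩
    simpa using hall j
  obtain ⟨j, hj⟩ := hdir
  refine ⟨j, fun y s hs t ht ↦ ?_⟩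
  by_contra hst
  have hdiff : (s - t) • Pi.single j (1 : k) ∈ S.direction := by
    have hvsub := AffineSubspace.vsub_mem_direction hs ht
    rwa [vsub_eq_sub, ← Function.update_sub, sub_self, ← Pi.single, ← mul_one (s - t),
      ← smul_eq_mul, Pi.single_smul] at hvsub
  exact hj ((Submodule.smul_mem_iff _ (sub_ne_zero.2 hst)).1 hdiff)

theorem chargesNoProperAffineSubspace_pi {ι : Type*} [Fintype ι] (ν : ι → Measure ℝ)
    [∀ i, SigmaFinite (ν i)] [∀ i, NullSingletonClass (ν i)] :
    ChargesNoProperAffineSubspace (Measure.pi ν) := by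
  classical
  intro S hS
  rcases S.eq_bot_or_nonempty with rfl | hne
  · simp
  obtain ⟨j, hj⟩ := exists_subsingleton_update_mem_of_ne_top hS hne
  have hmeas : MeasurableSet (S : Set (ι → ℝ)) := S.closed_of_finiteDimensional.measurableSet
  have hline (y : ι → ℝ) :
      ∫⁻ t, (S : Set (ι → ℝ)).indicator 1 (Function.update y j t) ∂ν j = 0 := by
    have hpre := hmeas.preimage (measurable_update y (a := j))
    calc ∫⁻ t, (S : Set (ι → ℝ)).indicator 1 (Function.update y j t) ∂ν j
        = ν j (Function.update y j ⁻¹' S) := lintegral_indicator_one hpre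
      _ = 0 := (hj y).measure_zero _
  rw [← lintegral_indicator_one hmeas, lintegral_eq_lmarginal_univ 0,
    lmarginal_erase' _ (measurable_one.indicator hmeas) (mem_univ j)]
  simp [hline, lmarginal]

variable {E : Type*} [NormedAddCommGroup E] [NormedSpace ℝ E] [FiniteDimensional ℝ E]
  [MeasurableSpace E] [BorelSpace E]

theorem ChargesNoProperAffineSubspace.map_const_smul {ν : Measure E}
    (hν : ChargesNoProperAffineSubspace ν) {a : ℝ} (ha : a ≠ 0) :
    ChargesNoProperAffineSubspace (ν.map (a • ·)) := by
  intro S hS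
  rw [Measure.map_apply (measurable_const_smul a) S.closed_of_finiteDimensional.measurableSet]
  refine hν (S.comap (a • LinearMap.id : E →ₗ[ℝ] E).toAffineMap) fun htop ↦ hS ?_
  refine top_le_iff.1 fun y _ ↦ ?_
  have hy : a⁻¹ • y ∈ S.comap (a • LinearMap.id : E →ₗ[ℝ] E).toAffineMap :=
    htop ▸ AffineSubspace.mem_top ℝ E _
  simpa [ha] using hy

end ProperAffineSubspaces

section RandomPoints

theorem ae_pi_of_ae_ae_finCons {n : ℕ} {α : Type*} [MeasurableSpace α]
    (ν : Fin (n + 1) → Measure α) [∀ i, SigmaFinite (ν i)] {p : (Fin (n + 1) → α) → Prop}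
    (hp : MeasurableSet {z | p z})
    (h : ∀ᵐ y ∂Measure.pi fun i : Fin n ↦ ν i.succ, ∀ᵐ x ∂ν 0, p (Fin.cons x y)) :
    ∀ᵐ z ∂Measure.pi ν, p z := by
  let e := MeasurableEquiv.piFinSuccAbove (fun _ : Fin (n + 1) ↦ α) 0
  have he : MeasurePreserving e (Measure.pi ν) ((ν 0).prod (Measure.pi fun i ↦ ν i.succ)) := by
    simpa only [Fin.zero_succAbove] using measurePreserving_piFinSuccAbove ν 0
  have he_symm (x : α) (y : Fin n → α) : e.symm (x, y) = Fin.cons x y :=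
    Fin.insertNth_zero' x y
  have hpe : MeasurableSet {z | p (e.symm z)} := e.symm.measurable hp
  have hprod : ∀ᵐ z ∂(ν 0).prod (Measure.pi fun i ↦ ν i.succ), p (e.symm z) := by
    rw [Measure.ae_prod_iff_ae_ae hpe, Measure.ae_ae_comm hpe]
    simpa only [he_symm] using h
  filter_upwards [he.quasiMeasurePreserving.ae hprod] with z hz
  rwa [e.symm_apply_apply] at hz

variable {E : Type*} [NormedAddCommGroup E] [NormedSpace ℝ E] [FiniteDimensional ℝ E]
  [MeasurableSpace E] [BorelSpace E]

theorem ae_pi_affineIndependent {n : ℕ} (hn : n ≤ Module.finrank ℝ E + 1) (ν : Fin n → Measure E)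
    [∀ i, SigmaFinite (ν i)] (hν : ∀ i, ChargesNoProperAffineSubspace (ν i)) :
    ∀ᵐ p ∂Measure.pi ν, AffineIndependent ℝ p := by
  induction n with
  | zero => exact .of_forall fun p ↦ affineIndependent_of_subsingleton ℝ p
  | succ n ih =>
    refine ae_pi_of_ae_ae_finCons ν isOpen_setOfPred_affineIndependent.measurableSet ?_
    filter_upwards [ih (by omega) (fun i ↦ ν i.succ) fun i ↦ hν i.succ] with q hq
    have hspan : affineSpan ℝ (Set.range q) ≠ ⊤ := fun htop ↦ by
      have hcard := hq.affineSpan_eq_top_iff_card_eq_finrank_add_one.1 htop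
      rw [Fintype.card_fin] at hcard
      omega
    filter_upwards [measure_eq_zero_iff_ae_notMem.1 (hν 0 _ hspan)] with p hp
    exact affineIndependent_finCons hq hp

theorem ae_affineSpan_range_eq_top {Ω ι : Type*} [MeasurableSpace Ω] {μ : Measure Ω} [Fintype ι]
    {X : ι → Ω → E} (hcard : Module.finrank ℝ E < Fintype.card ι)
    (hmeas : ∀ i, AEMeasurable (X i) μ) (hindep : iIndepFun X μ)
    (hnull : ∀ i, ChargesNoProperAffineSubspace (μ.map (X i))) :
    ∀ᵐ ω ∂μ, affineSpan ℝ (Set.range fun i ↦ X i ω) = ⊤ := by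
  have := hindep.isProbabilityMeasure
  obtain ⟨e⟩ : Nonempty (Fin (Module.finrank ℝ E + 1) ↪ ι) :=
    Function.Embedding.nonempty_of_card_le (by rwa [Fintype.card_fin])
  have hpi := ae_pi_affineIndependent le_rfl (fun i ↦ μ.map (X (e i))) fun i ↦ hnull (e i)
  rw [← (hindep.precomp e.injective).map_fun_eq_pi_map fun i ↦ hmeas (e i)] at hpi
  filter_upwards [ae_of_ae_map (aemeasurable_pi_lambda _ fun i ↦ hmeas (e i)) hpi] with ω hω
  rw [← top_le_iff,
    ← hω.affineSpan_eq_top_iff_card_eq_finrank_add_one.2 (Fintype.card_fin _)]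
  exact affineSpan_mono ℝ (Set.range_comp_subset_range e fun i ↦ X i ω)

end RandomPoints

section IndependentIncrements

variable {d m : ℕ} {Ω : Type*} [MeasurableSpace Ω] {μ : Measure Ω} {X : ℝ → Ω → Fin d → ℝ}
  {c : ℕ → ℝ}

theorem ae_affineSpan_range_slope_eq_top (hmd : d < m) (hc : ∀ i < m, c i ≠ c (i + 1))
    (hmeas : ∀ i : Fin m, AEMeasurable (fun ω ↦ X (c (i + 1)) ω - X (c i) ω) μ)
    (hindep : iIndepFun (fun (i : Fin m) ω ↦ X (c (i + 1)) ω - X (c i) ω) μ)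
    (hnull : ∀ i : Fin m,
      ChargesNoProperAffineSubspace (μ.map fun ω ↦ X (c (i + 1)) ω - X (c i) ω)) :
    ∀ᵐ ω ∂μ, affineSpan ℝ
      (Set.range fun i : Fin m ↦ slope (fun t ↦ X t ω) (c i) (c (i + 1))) = ⊤ := by
  simp only [slope_def_module]
  have hsmul (i : Fin m) : Measurable fun y : Fin d → ℝ ↦ (c (i + 1) - c i)⁻¹ • y :=
    measurable_const_smul _
  refine ae_affineSpan_range_eq_top (by simpa using hmd)
    (fun i ↦ (hsmul i).comp_aemeasurable (hmeas i)) (hindep.comp _ hsmul) fun i ↦ ?_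
  have hwidth : (c (i + 1) - c i)⁻¹ ≠ 0 := inv_ne_zero (sub_ne_zero.2 (hc i i.2).symm)
  have hmap := (hnull i).map_const_smul hwidth
  rwa [AEMeasurable.map_map_of_aemeasurable (hsmul i).aemeasurable (hmeas i)] at hmap

theorem stmt_14_general (hd : 0 < d) (hX0 : ∀ ω, X 0 ω = 0)
    (hc0 : c 0 = 0) (hcm : c m = 1) (hmono : ∀ i < m, c i < c (i + 1))
    (hmeas : ∀ i : Fin m, AEMeasurable (fun ω ↦ X (c (i + 1)) ω - X (c i) ω) μ)
    (hindep : iIndepFun (fun (i : Fin m) ω ↦ X (c (i + 1)) ω - X (c i) ω) μ)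
    (hnull : ∀ i : Fin m,
      ChargesNoProperAffineSubspace (μ.map fun ω ↦ X (c (i + 1)) ω - X (c i) ω)) :
    (d + 1 ≤ m → ∀ᵐ ω ∂μ, (gm d m (fun t ↦ X t ω) c).PosDef) ∧
    (m ≤ d → ∀ ω, (gm d m (fun t ↦ X t ω) c).det = 0) := by
  refine ⟨fun hmd ↦ ?_, fun hmd ω ↦ det_gm_eq_zero hmd (hX0 ω) hc0 hcm⟩
  filter_upwards [ae_affineSpan_range_slope_eq_top hmd (fun i hi ↦ (hmono i hi).ne) hmeas hindep
    hnull] with ω hω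
  exact posDef_gm (by omega) hω

end IndependentIncrements

namespace IsStdBM

variable {d m : ℕ} {Ω : Type*} [MeasurableSpace Ω] {μ : Measure Ω} {B : ℝ → Ω → Fin d → ℝ}
  {c : ℕ → ℝ}

theorem measurable_increment (hB : IsStdBM d μ B) {s t : ℝ} (hs : s ∈ Set.Icc 0 1)
    (ht : t ∈ Set.Icc 0 1) : Measurable fun ω ↦ B t ω - B s ω :=
  (hB.2.2.1 t ht).sub (hB.2.2.1 s hs)

theorem iIndepFun_increments (hB : IsStdBM d μ B) (hc : MonotoneOn c (Set.Iic m))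
    (hc01 : ∀ {i}, i ≤ m → c i ∈ Set.Icc 0 1) :
    iIndepFun (fun (i : Fin m) ω ↦ B (c (i + 1)) ω - B (c i) ω) μ := by
  have hmono : Monotone fun i ↦ c (min i m) := fun i j hij ↦
    hc (min_le_right i m) (min_le_right j m) (min_le_min_right m hij)
  convert hB.2.2.2.1 m _ hmono (fun i ↦ hc01 (min_le_right i m)) using 4 with i ω
  · rw [min_eq_left (by omega)]
  · rw [min_eq_left (by omega)]

theorem chargesNoProperAffineSubspace_map_increment (hB : IsStdBM d μ B) {s t : ℝ} (hs : 0 ≤ s)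
    (hst : s < t) (ht : t ≤ 1) :
    ChargesNoProperAffineSubspace (μ.map fun ω ↦ B t ω - B s ω) := by
  rw [hB.2.2.2.2 s t hs hst.le ht]
  have : NullSingletonClass (gaussianReal 0 (t - s).toNNReal) :=
    nullSingletonClass_gaussianReal (Real.toNNReal_pos.2 (sub_pos.2 hst)).ne'
  exact chargesNoProperAffineSubspace_pi _

end IsStdBM

/-- if `m ≥ d + 1` then `g_m(B, w)` is positive definite almost surely;
if `m ≤ d` then `g_m(B, w)` is singular almost surely. -/
theorem stmt_14 (d m : ℕ) (hd : 0 < d) (hm : 1 ≤ m)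
    {Ω : Type*} [MeasurableSpace Ω] (μ : Measure Ω) [IsProbabilityMeasure μ]
    (B : ℝ → Ω → (Fin d → ℝ)) (hB : IsStdBM d μ B)
    (c : ℕ → ℝ) (hc0 : c 0 = 0) (hcm : c m = 1) (hmono : ∀ i < m, c i < c (i + 1)) :
    (d + 1 ≤ m → ∀ᵐ ω ∂μ, (gm d m (fun t => B t ω) c).PosDef) ∧
    (m ≤ d → ∀ᵐ ω ∂μ, (gm d m (fun t => B t ω) c).det = 0) := by
  have hc : MonotoneOn c (Set.Iic m) := (strictMonoOn_Iic_of_lt_succ hmono).monotoneOn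
  have hc01 {i : ℕ} (hi : i ≤ m) : c i ∈ Set.Icc 0 1 :=
    ⟨hc0 ▸ hc (Nat.zero_le m) hi (Nat.zero_le i), hcm ▸ hc hi (le_refl m) hi⟩
  obtain ⟨hposDef, hsingular⟩ := stmt_14_general hd hB.1 hc0 hcm hmono
    (fun i ↦ (hB.measurable_increment (hc01 i.2.le) (hc01 i.2)).aemeasurable)
    (hB.iIndepFun_increments hc hc01)
    (fun i ↦ hB.chargesNoProperAffineSubspace_map_increment (hc01 i.2.le).1 (hmono i i.2)
      (hc01 i.2).2)
  exact ⟨hposDef, fun hmd ↦ .of_forall (hsingular hmd)⟩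
end
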